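/- arXiv:1910.13044 — 2 statements merged into one kernel-verified Lean document; each statement's English description precedes it below -/
import Mathlib

section
/- Let p be a prime and let G = ℚ_p^× be the multiplicative group of the field of p-adic numbers, with its locally compact topology. Let N denote the set of open finite-index subgroups of G. Then the Chabauty space C(G) is a proper compactification of ℕ with respect to N; that is, C(G) is a compact metrizable space and N is an open, countable, dense, discrete subset of C(G). -/
/-- The Chabauty space of a topological group `G`: the set of closed subgroups of `G`. -/
def ChabautySpace (G : Type*) [Group G] [TopologicalSpace G] : Type _ :=
  {H : Subgroup G // IsClosed (H : Set G)}

/-- The Chabauty topology on the space of closed subgroups, generated by the sets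
`O_K = {H | H ∩ K = ∅}` for `K` compact and `O'_U = {H | H ∩ U ≠ ∅}` for `U` open. -/
instance ChabautySpace.instTopologicalSpace (G : Type*) [Group G] [TopologicalSpace G] :
    TopologicalSpace (ChabautySpace G) :=
  TopologicalSpace.generateFrom
    ({S | ∃ K : Set G, IsCompact K ∧ S = {H : ChabautySpace G | (H.1 : Set G) ∩ K = ∅}} ∪
     {S | ∃ U : Set G, IsOpen U ∧ S = {H : ChabautySpace G | ((H.1 : Set G) ∩ U).Nonempty}})

open Set Filter Topology

namespace ChabautySpace

section General

variable {G : Type*} [Group G] [TopologicalSpace G]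

theorem isOpen_setOf_inter_eq_empty {K : Set G} (hK : IsCompact K) :
    IsOpen {H : ChabautySpace G | (H.1 : Set G) ∩ K = ∅} :=
  TopologicalSpace.isOpen_generateFrom_of_mem (Or.inl ⟨K, hK, rfl⟩)

theorem isOpen_setOf_inter_nonempty {U : Set G} (hU : IsOpen U) :
    IsOpen {H : ChabautySpace G | ((H.1 : Set G) ∩ U).Nonempty} :=
  TopologicalSpace.isOpen_generateFrom_of_mem (Or.inr ⟨U, hU, rfl⟩)

/-- The limit of an ultrafilter of closed subgroups: the points all of whose neighbourhoods
meet almost every subgroup. -/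
def ultrafilterLimit [IsTopologicalGroup G] (F : Ultrafilter (ChabautySpace G)) :
    ChabautySpace G where
  val :=
    { carrier := {x | ∀ U ∈ 𝓝 x, ∀ᶠ H in (F : Filter (ChabautySpace G)),
        ((H.1 : Set G) ∩ U).Nonempty}
      one_mem' := fun U hU => Eventually.of_forall fun H =>
        ⟨1, H.1.one_mem, mem_of_mem_nhds hU⟩
      mul_mem' := by
        intro x y hx hy U hU
        have hmul : Tendsto (fun q : G × G => q.1 * q.2) (𝓝 x ×ˢ 𝓝 y) (𝓝 (x * y)) := by
          rw [← nhds_prod_eq]; exact continuous_mul.tendsto (x, y)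
        obtain ⟨V, hV, W, hW, hVW⟩ := mem_prod_iff.1 (hmul hU)
        filter_upwards [hx V hV, hy W hW] with H ⟨a, ha, haV⟩ ⟨b, hb, hbW⟩
        exact ⟨a * b, H.1.mul_mem ha hb, hVW (mk_mem_prod haV hbW)⟩
      inv_mem' := by
        intro x hx U hU
        filter_upwards [hx _ (continuous_inv.tendsto x hU)] with H ⟨a, ha, haU⟩
        exact ⟨a⁻¹, H.1.inv_mem ha, haU⟩ }
  property := by
    refine isClosed_iff_frequently.2 fun x hx U hU => ?_
    obtain ⟨y, hy, hyU⟩ := (hx.and_eventually (eventually_mem_nhds_iff.2 hU)).exists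
    exact hy U hyU

theorem ultrafilter_le_nhds_ultrafilterLimit [IsTopologicalGroup G]
    (F : Ultrafilter (ChabautySpace G)) :
    (F : Filter (ChabautySpace G)) ≤ 𝓝 (ultrafilterLimit F) := by
  rw [TopologicalSpace.nhds_generateFrom]
  refine le_iInf₂ fun S hS => le_principal_iff.2 ?_
  obtain ⟨hmem, ⟨K, hK, rfl⟩ | ⟨U, hU, rfl⟩⟩ := hS
  · have hfar : ∀ x ∈ K, ∃ U ∈ 𝓝 x, ∀ᶠ H in (F : Filter (ChabautySpace G)),
        (H.1 : Set G) ∩ U = ∅ := by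
      intro x hx
      have hxL : x ∉ (ultrafilterLimit F).1 := fun hxL =>
        (hmem : _ ∩ K = ∅).subset (⟨hxL, hx⟩ : x ∈ _ ∩ K)
      have : ∃ U ∈ 𝓝 x, ¬ ∀ᶠ H in (F : Filter (ChabautySpace G)),
          ((H.1 : Set G) ∩ U).Nonempty := by
        by_contra! hcon
        exact hxL hcon
      obtain ⟨U, hU, hFU⟩ := this
      refine ⟨U, hU, ?_⟩
      simpa only [not_nonempty_iff_eq_empty] using Ultrafilter.eventually_not.2 hFU
    choose! V hV hFV using hfar
    obtain ⟨t, htK, hKt⟩ := hK.elim_nhds_subcover V hV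
    have : ∀ᶠ H in (F : Filter (ChabautySpace G)), ∀ x ∈ t, (H.1 : Set G) ∩ V x = ∅ :=
      (eventually_all_finset t).2 fun x hx => hFV x (htK x hx)
    filter_upwards [this] with H hH
    refine eq_empty_of_forall_notMem fun y hy => ?_
    obtain ⟨x, hx, hyx⟩ := mem_iUnion₂.1 (hKt hy.2)
    exact (hH x hx).subset ⟨hy.1, hyx⟩
  · obtain ⟨x, hx, hxU⟩ := hmem
    exact hx U (hU.mem_nhds hxU)

instance [IsTopologicalGroup G] : CompactSpace (ChabautySpace G) :=
  ⟨isCompact_iff_ultrafilter_le_nhds.2 fun F _ =>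
    ⟨ultrafilterLimit F, mem_univ _, ultrafilter_le_nhds_ultrafilterLimit F⟩⟩

instance [LocallyCompactSpace G] : T2Space (ChabautySpace G) := by
  have key : ∀ H L : ChabautySpace G, ∀ x ∈ H.1, x ∉ L.1 → ∃ u v : Set (ChabautySpace G),
      IsOpen u ∧ IsOpen v ∧ H ∈ u ∧ L ∈ v ∧ Disjoint u v := by
    intro H L x hxH hxL
    obtain ⟨K, hK, hxK, hKL⟩ := exists_compact_subset L.2.isOpen_compl hxL
    refine ⟨_, _, isOpen_setOf_inter_nonempty isOpen_interior, isOpen_setOf_inter_eq_empty hK,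
      ⟨x, hxH, hxK⟩, eq_empty_of_forall_notMem fun y hy => hKL hy.2 hy.1, ?_⟩
    refine Set.disjoint_left.2 fun M ⟨y, hyM, hyK⟩ hM => ?_
    exact (hM : _ ∩ K = ∅).subset ⟨hyM, interior_subset hyK⟩
  refine ⟨fun H L hne => ?_⟩
  by_cases hle : H.1 ≤ L.1
  · obtain ⟨x, hxL, hxH⟩ := SetLike.not_le_iff_exists.1
      fun hge => hne (Subtype.ext (le_antisymm hle hge))
    obtain ⟨u, v, hu, hv, hLu, hHv, huv⟩ := key L H x hxL hxH
    exact ⟨v, u, hv, hu, hHv, hLu, huv.symm⟩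
  · obtain ⟨x, hxH, hxL⟩ := SetLike.not_le_iff_exists.1 hle
    exact key H L x hxH hxL

instance [LocallyCompactSpace G] [T2Space G] [SecondCountableTopology G] :
    SecondCountableTopology (ChabautySpace G) := by
  let B := TopologicalSpace.countableBasis G
  have hB : TopologicalSpace.IsTopologicalBasis B := TopologicalSpace.isBasis_countableBasis G
  let hit : Set G → Set (ChabautySpace G) := fun U => {H | ((H.1 : Set G) ∩ U).Nonempty}
  let miss : Set G → Set (ChabautySpace G) := fun K => {H | (H.1 : Set G) ∩ K = ∅}
  let C : Set (Set (ChabautySpace G)) :=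
    hit '' B ∪ (fun b => miss (closure b)) '' {b ∈ B | IsCompact (closure b)}
  have hC : C.Countable :=
    ((TopologicalSpace.countable_countableBasis G).image _).union
      (((TopologicalSpace.countable_countableBasis G).mono (sep_subset _ _)).image _)
  have heq : instTopologicalSpace G = TopologicalSpace.generateFrom C := by
    apply le_antisymm
    · refine le_generateFrom ?_
      rintro S (⟨b, hb, rfl⟩ | ⟨b, hb, rfl⟩)
      · exact isOpen_setOf_inter_nonempty (hB.isOpen hb)
      · exact isOpen_setOf_inter_eq_empty hb.2
    · refine le_generateFrom ?_
      let _ : TopologicalSpace (ChabautySpace G) := TopologicalSpace.generateFrom C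
      rintro S (⟨K, hK, rfl⟩ | ⟨U, hU, rfl⟩)
      · refine isOpen_iff_mem_nhds.2 fun H hH => ?_
        have hnear : ∀ x ∈ K, ∃ b ∈ B, x ∈ b ∧ IsCompact (closure b) ∧
            (H.1 : Set G) ∩ closure b = ∅ := by
          intro x hx
          have hxH : x ∈ (H.1 : Set G)ᶜ := fun hxH => (hH : _ ∩ K = ∅).subset ⟨hxH, hx⟩
          obtain ⟨Q, hQ, hxQ, hQH⟩ := exists_compact_subset H.2.isOpen_compl hxH
          obtain ⟨b, hb, hxb, hbQ⟩ := hB.exists_subset_of_mem_open hxQ isOpen_interior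
          have hcl : closure b ⊆ Q :=
            closure_minimal (hbQ.trans interior_subset) hQ.isClosed
          exact ⟨b, hb, hxb, hQ.of_isClosed_subset isClosed_closure hcl,
            eq_empty_of_forall_notMem fun y hy => hQH (hcl hy.2) hy.1⟩
        choose! b hbB hxb hbc hbH using hnear
        obtain ⟨t, htK, hKt⟩ := hK.elim_nhds_subcover b
          fun x hx => (hB.isOpen (hbB x hx)).mem_nhds (hxb x hx)
        have hopen : ∀ x ∈ t, miss (closure (b x)) ∈ 𝓝 H := fun x hx =>
          (TopologicalSpace.isOpen_generateFrom_of_mem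
            (Or.inr ⟨b x, ⟨hbB x (htK x hx), hbc x (htK x hx)⟩, rfl⟩)).mem_nhds
            (hbH x (htK x hx))
        filter_upwards [(Filter.biInter_finset_mem t).2 hopen] with L hL
        refine eq_empty_of_forall_notMem fun y hy => ?_
        obtain ⟨x, hx, hyx⟩ := mem_iUnion₂.1 (hKt hy.2)
        exact (mem_iInter₂.1 hL x hx : _ ∩ _ = ∅).subset ⟨hy.1, subset_closure hyx⟩
      · refine isOpen_iff_mem_nhds.2 fun H ⟨x, hxH, hxU⟩ => ?_
        obtain ⟨b, hb, hxb, hbU⟩ := hB.exists_subset_of_mem_open hxU hU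
        have : hit b ∈ 𝓝 H := (TopologicalSpace.isOpen_generateFrom_of_mem
          (Or.inl ⟨b, hb, rfl⟩)).mem_nhds ⟨x, hxH, hxb⟩
        filter_upwards [this] with L hL
        exact hL.mono (inter_subset_inter_right _ hbU)
  exact ⟨⟨C, hC, heq⟩⟩

/-- Among the closed subgroups containing `H`, missing a suitable compact set suffices to lie
in a given neighbourhood of `H`. -/
theorem exists_isCompact_of_isOpen {H : ChabautySpace G} {W : Set (ChabautySpace G)}
    (hW : IsOpen W) (hH : H ∈ W) :
    ∃ K : Set G, IsCompact K ∧ (H.1 : Set G) ∩ K = ∅ ∧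
      ∀ L : ChabautySpace G, H.1 ≤ L.1 → (L.1 : Set G) ∩ K = ∅ → L ∈ W := by
  induction hW with
  | basic S hS =>
    obtain ⟨K, hK, rfl⟩ | ⟨U, hU, rfl⟩ := hS
    · exact ⟨K, hK, hH, fun L _ hL => hL⟩
    · exact ⟨∅, isCompact_empty, inter_empty _,
        fun L hHL _ => Set.Nonempty.mono (inter_subset_inter_left _ hHL) hH⟩
  | univ => exact ⟨∅, isCompact_empty, inter_empty _, fun L _ _ => mem_univ L⟩
  | inter S T _ _ ihS ihT =>
    obtain ⟨K, hK, hHK, hKS⟩ := ihS hH.1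
    obtain ⟨Q, hQ, hHQ, hQT⟩ := ihT hH.2
    refine ⟨K ∪ Q, hK.union hQ, by rw [inter_union_distrib_left, hHK, hHQ, empty_union], ?_⟩
    intro L hHL hL
    rw [inter_union_distrib_left, union_empty_iff] at hL
    exact ⟨hKS L hHL hL.1, hQT L hHL hL.2⟩
  | sUnion 𝒮 _ ih =>
    obtain ⟨S, hS, hHS⟩ := hH
    obtain ⟨K, hK, hHK, hKS⟩ := ih S hS hHS
    exact ⟨K, hK, hHK, fun L hHL hL => ⟨S, hS, hKS L hHL hL⟩⟩

/-- If `G` is covered by the translates of a compact set `C` by powers of `h ∈ H`, then an open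
subgroup `H` is isolated as soon as its neighbours all contain a fixed open subgroup. -/
theorem isOpen_singleton_of_forall_exists_zpow_mul_mem [IsTopologicalGroup G]
    {H : ChabautySpace G} (hH : IsOpen (H.1 : Set G)) {U : Subgroup G}
    (hU : IsOpen (U : Set G)) (hnear : ∀ᶠ L in 𝓝 H, U ≤ L.1)
    {C : Set G} (hC : IsCompact C) {h : G} (hh : h ∈ H.1)
    (hcover : ∀ x : G, ∃ j : ℤ, h ^ j * x ∈ C) : IsOpen {H} := by
  have hcoset : ∀ g ∈ H.1, ∀ᶠ L in 𝓝 H, ∀ u ∈ U, g * u ∈ L.1 := by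
    intro g hg
    have hopen : IsOpen ((fun x => g⁻¹ * x) ⁻¹' (U : Set G)) :=
      hU.preimage (continuous_const_mul _)
    filter_upwards [hnear, (isOpen_setOf_inter_nonempty hopen).mem_nhds
      ⟨g, hg, by simp⟩] with L hUL ⟨x, hxL, hxU⟩ u hu
    have : g * u = x * ((g⁻¹ * x)⁻¹ * u) := by group
    rw [this]
    exact L.1.mul_mem hxL (hUL (U.mul_mem (U.inv_mem hxU) hu))
  have hcompl : ∀ᶠ L in 𝓝 H, (L.1 : Set G) ∩ (C ∩ (H.1 : Set G)ᶜ) = ∅ :=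
    (isOpen_setOf_inter_eq_empty (hC.inter_right hH.isClosed_compl)).mem_nhds
      (eq_empty_of_forall_notMem fun x hx => hx.2.2 hx.1)
  obtain ⟨t, ht, hCt⟩ := (hC.inter_right H.2).elim_nhds_subcover
    (fun g => (fun x => g⁻¹ * x) ⁻¹' (U : Set G)) fun g _ =>
      (hU.preimage (continuous_const_mul _)).mem_nhds (by simp)
  have hfin : ∀ᶠ L in 𝓝 H, ∀ g ∈ t, ∀ u ∈ U, g * u ∈ L.1 :=
    (eventually_all_finset t).2 fun g hg => hcoset g (ht g hg).2
  rw [isOpen_singleton_iff_nhds_eq_pure]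
  refine le_antisymm (le_pure_iff.2 ?_) (pure_le_nhds H)
  filter_upwards [hcompl, hfin, hcoset h hh] with L hLC hLt hLh
  have hhL : h ∈ L.1 := by simpa using hLh 1 U.one_mem
  have hCL : ∀ x ∈ C, x ∈ H.1 → x ∈ L.1 := by
    intro x hxC hxH
    obtain ⟨g, hg, hgx⟩ := mem_iUnion₂.1 (hCt ⟨hxC, hxH⟩)
    simpa using hLt g hg _ hgx
  refine Subtype.ext (le_antisymm (fun x hx => ?_) fun x hx => ?_)
  · obtain ⟨j, hj⟩ := hcover x
    by_contra hxH
    refine hLC.subset ⟨L.1.mul_mem (L.1.zpow_mem hhL j) hx, hj, fun hmem => hxH ?_⟩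
    exact (H.1.mul_mem_cancel_left (H.1.zpow_mem hh j)).1 hmem
  · obtain ⟨j, hj⟩ := hcover x
    exact (L.1.mul_mem_cancel_left (L.1.zpow_mem hhL j)).1
      (hCL _ hj (H.1.mul_mem (H.1.zpow_mem hh j) hx))

end General

end ChabautySpace

/-- An open subgroup containing an element whose powers translate a compact set over the whole
group has finite index. -/
theorem Subgroup.index_ne_zero_of_forall_exists_zpow_mul_mem {G : Type*} [CommGroup G]
    [TopologicalSpace G] [IsTopologicalGroup G] {L : Subgroup G} (hL : IsOpen (L : Set G))
    {C : Set G} (hC : IsCompact C) {h : G} (hh : h ∈ L)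
    (hcover : ∀ x : G, ∃ j : ℤ, h ^ j * x ∈ C) : L.index ≠ 0 := by
  have : DiscreteTopology (G ⧸ L) := QuotientGroup.discreteTopology hL
  have himage : ((↑) : G → G ⧸ L) '' C = univ := by
    refine eq_univ_of_forall fun q => ?_
    obtain ⟨x, rfl⟩ := QuotientGroup.mk_surjective q
    obtain ⟨j, hj⟩ := hcover x
    refine ⟨_, hj, QuotientGroup.eq.2 ?_⟩
    simpa [mul_comm] using L.inv_mem (L.zpow_mem hh j)
  have : CompactSpace (G ⧸ L) :=
    ⟨himage ▸ hC.image QuotientGroup.continuous_mk⟩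
  have : Finite (G ⧸ L) := finite_of_compact_of_discrete
  exact L.finiteIndex_of_finite_quotient.index_ne_zero

namespace Padic

variable {p : ℕ} [Fact p.Prime]

theorem norm_one_add_pow_sub_le {y : ℚ_[p]} (hy : ‖y‖ ≤ 1) (a : ℕ) :
    ‖(1 + y) ^ a - 1 - a * y‖ ≤ ‖y‖ ^ 2 := by
  obtain ⟨y, rfl⟩ : ∃ y' : ℤ_[p], (y' : ℚ_[p]) = y := ⟨⟨y, hy⟩, rfl⟩
  obtain ⟨k, hk⟩ := Polynomial.powAddExpansion 1 y a
  have hk' : (1 + (y : ℚ_[p])) ^ a = 1 + a * y + k * y ^ 2 := by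
    have := congrArg ((↑) : ℤ_[p] → ℚ_[p]) hk
    push_cast at this
    simpa using this
  have : (1 + (y : ℚ_[p])) ^ a - 1 - a * y = k * y ^ 2 := by rw [hk']; ring
  rw [this, norm_mul, norm_pow]
  exact mul_le_of_le_one_left (by positivity) k.2

theorem norm_pow_prime_sub_one {z : ℚ_[p]} (hz : ‖z - 1‖ < (p : ℝ)⁻¹) :
    ‖z ^ p - 1‖ = (p : ℝ)⁻¹ * ‖z - 1‖ := by
  have hp : (1 : ℝ) < p := mod_cast (Fact.out : p.Prime).one_lt
  rcases eq_or_ne z 1 with rfl | hne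
  · simp
  have hpos : 0 < ‖z - 1‖ := norm_pos_iff.2 (sub_ne_zero.2 hne)
  have hlt : ‖z ^ p - 1 - p * (z - 1)‖ < ‖(p : ℚ_[p]) * (z - 1)‖ := by
    have := norm_one_add_pow_sub_le (hz.le.trans (inv_le_one_of_one_le₀ hp.le)) p
    rw [add_sub_cancel] at this
    refine this.trans_lt ?_
    rw [norm_mul, Padic.norm_p, sq]
    gcongr
  have := IsUltrametricDist.norm_add_eq_max_of_norm_ne_norm hlt.ne
  rwa [sub_add_cancel, max_eq_right hlt.le, norm_mul, Padic.norm_p] at this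

theorem exists_norm_sub_pow_lt {w z : ℚ_[p]} (hz : ‖z - 1‖ < 1) (hne : z ≠ 1)
    (hw : ‖w - 1‖ ≤ ‖z - 1‖) : ∃ a : ℕ, ‖w - z ^ a‖ < ‖z - 1‖ := by
  have hz0 : z - 1 ≠ 0 := sub_ne_zero.2 hne
  have hpos : 0 < ‖z - 1‖ := norm_pos_iff.2 hz0
  have hc : ‖(w - 1) / (z - 1)‖ ≤ 1 := by rw [norm_div]; exact div_le_one_of_le₀ hw hpos.le
  obtain ⟨c, hcwz⟩ : ∃ c : ℤ_[p], (c : ℚ_[p]) = (w - 1) / (z - 1) := ⟨⟨_, hc⟩, rfl⟩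
  obtain ⟨a, -, ha⟩ := PadicInt.exists_mem_range c
  rw [PadicInt.maximalIdeal_eq_span_p, Ideal.mem_span_singleton,
    ← PadicInt.norm_lt_one_iff_dvd, PadicInt.norm_def] at ha
  have ha' : ‖(w - 1) / (z - 1) - a‖ < 1 := by simpa [hcwz] using ha
  refine ⟨a, ?_⟩
  have hsq := norm_one_add_pow_sub_le hz.le a
  rw [add_sub_cancel] at hsq
  have hsplit : w - z ^ a
      = ((w - 1) / (z - 1) - a) * (z - 1) - (z ^ a - 1 - a * (z - 1)) := by
    field_simp; ring
  rw [hsplit]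
  rw [sub_eq_add_neg]
  refine (IsUltrametricDist.norm_add_le_max _ _).trans_lt (max_lt ?_ ?_)
  · rw [norm_mul]; exact mul_lt_of_lt_one_left hpos ha'
  · rw [norm_neg]
    exact hsq.trans_lt (by rw [sq]; exact mul_lt_of_lt_one_left hpos hz)

theorem isCompact_setOf_norm_units_mem_Icc {a b : ℝ} (ha : 0 < a) :
    IsCompact {x : ℚ_[p]ˣ | ‖(x : ℚ_[p])‖ ∈ Icc a b} := by
  have hemb : IsOpenEmbedding (Units.val : ℚ_[p]ˣ → ℚ_[p]) := Units.isOpenEmbedding_val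
  have hK : IsCompact {y : ℚ_[p] | ‖y‖ ∈ Icc a b} :=
    (isCompact_closedBall (0 : ℚ_[p]) b).of_isClosed_subset
      (isClosed_Icc.preimage continuous_norm) fun y hy => mem_closedBall_zero_iff.2 hy.2
  refine hemb.isInducing.isCompact_preimage' hK fun y hy => ?_
  exact ⟨Units.mk0 y (norm_pos_iff.1 (ha.trans_le hy.1)), rfl⟩

theorem exists_isCompact_forall_exists_zpow_mul_mem {h : ℚ_[p]ˣ} (hh : ‖(h : ℚ_[p])‖ ≠ 1) :
    ∃ C : Set ℚ_[p]ˣ, IsCompact C ∧ ∀ x, ∃ j : ℤ, h ^ j * x ∈ C := by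
  wlog hgt : 1 < ‖(h : ℚ_[p])‖ generalizing h
  · have hlt := lt_of_le_of_ne (not_lt.1 hgt) hh
    have hinv : 1 < ‖((h⁻¹ : ℚ_[p]ˣ) : ℚ_[p])‖ := by
      rw [Units.val_inv_eq_inv_val, norm_inv]
      exact (one_lt_inv₀ (norm_pos_iff.2 h.ne_zero)).2 hlt
    obtain ⟨C, hC, hcover⟩ := this hinv.ne' hinv
    refine ⟨C, hC, fun x => ?_⟩
    obtain ⟨j, hj⟩ := hcover x
    exact ⟨-j, by simpa using hj⟩
  refine ⟨_, isCompact_setOf_norm_units_mem_Icc (b := ‖(h : ℚ_[p])‖) one_pos, fun x => ?_⟩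
  have h0 : 0 < ‖(h : ℚ_[p])‖ := one_pos.trans hgt
  obtain ⟨n, hn, hn'⟩ := exists_mem_Ico_zpow (norm_pos_iff.2 x.ne_zero) hgt
  refine ⟨-n, ?_⟩
  have hz : 0 < ‖(h : ℚ_[p])‖ ^ n := zpow_pos h0 n
  rw [zpow_add_one₀ h0.ne'] at hn'
  rw [mem_ofPred_eq, mem_Icc, Units.val_mul, Units.val_zpow_eq_zpow_val, norm_mul, norm_zpow,
    zpow_neg, inv_mul_eq_div, le_div_iff₀ hz, div_le_iff₀ hz, one_mul]
  exact ⟨hn, by linarith⟩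

variable (p) in
/-- The `n`-th higher unit group `{u ∈ ℤ_pˣ | u ≡ 1 mod p ^ n}`, as a subgroup of `ℚ_pˣ`. -/
def higherUnits (n : ℕ) : Subgroup ℚ_[p]ˣ where
  carrier := {u | ‖(u : ℚ_[p])‖ = 1 ∧ ‖(u : ℚ_[p]) - 1‖ ≤ (p : ℝ)⁻¹ ^ n}
  one_mem' := by simp
  mul_mem' := by
    rintro u v ⟨hu, hu1⟩ ⟨hv, hv1⟩
    refine ⟨by simp [hu, hv], ?_⟩
    have : ((u * v : ℚ_[p]ˣ) : ℚ_[p]) - 1 = u * (v - 1) + (u - 1) := by push_cast; ring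
    rw [this]
    refine (IsUltrametricDist.norm_add_le_max _ _).trans (max_le ?_ hu1)
    rwa [norm_mul, hu, one_mul]
  inv_mem' := by
    rintro u ⟨hu, hu1⟩
    have : ((u⁻¹ : ℚ_[p]ˣ) : ℚ_[p]) - 1 = -((u⁻¹ : ℚ_[p]ˣ) * (u - 1)) := by
      rw [mul_sub, Units.inv_mul]; ring
    refine ⟨by simp [hu], ?_⟩
    rw [this, norm_neg, norm_mul, Units.val_inv_eq_inv_val, norm_inv, hu, inv_one, one_mul]
    exact hu1

theorem norm_eq_one_of_norm_sub_one_lt {z : ℚ_[p]} (hz : ‖z - 1‖ < 1) : ‖z‖ = 1 := by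
  have := IsUltrametricDist.norm_add_eq_max_of_norm_ne_norm
    (x := z - 1) (y := 1) (by simpa using hz.ne)
  simpa [hz.le] using this

theorem isOpen_higherUnits (n : ℕ) : IsOpen (higherUnits p n : Set ℚ_[p]ˣ) := by
  have hp : (1 : ℝ) < p := mod_cast (Fact.out : p.Prime).one_lt
  refine Subgroup.isOpen_of_mem_nhds _ (g := 1) ?_
  have hpos : 0 < (p : ℝ)⁻¹ ^ n := by positivity
  have hle : (p : ℝ)⁻¹ ^ n ≤ 1 := pow_le_one₀ (by positivity) (inv_le_one_of_one_le₀ hp.le)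
  have hball : Metric.ball (1 : ℚ_[p]) ((p : ℝ)⁻¹ ^ n) ∈ 𝓝 ((1 : ℚ_[p]ˣ) : ℚ_[p]) :=
    Metric.ball_mem_nhds _ hpos
  filter_upwards [Units.continuous_val.tendsto (1 : ℚ_[p]ˣ) hball] with u hu
  have hu' : ‖(u : ℚ_[p]) - 1‖ < (p : ℝ)⁻¹ ^ n := mem_ball_iff_norm.1 hu
  exact ⟨norm_eq_one_of_norm_sub_one_lt (hu'.trans_le hle), hu'.le⟩

theorem exists_higherUnits_subset {V : Set ℚ_[p]ˣ} (hV : V ∈ 𝓝 1) :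
    ∃ n, 2 ≤ n ∧ (higherUnits p n : Set ℚ_[p]ˣ) ⊆ V := by
  have hp : (1 : ℝ) < p := mod_cast (Fact.out : p.Prime).one_lt
  have hemb : IsOpenEmbedding (Units.val : ℚ_[p]ˣ → ℚ_[p]) := Units.isOpenEmbedding_val
  rw [hemb.isInducing.nhds_eq_comap] at hV
  obtain ⟨W, hW, hWV⟩ := mem_comap.1 hV
  obtain ⟨ε, hε, hεW⟩ := Metric.mem_nhds_iff.1 hW
  obtain ⟨n, hn⟩ := exists_pow_lt_of_lt_one hε (inv_lt_one_of_one_lt₀ hp)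
  refine ⟨n + 2, by omega, fun u hu => hWV (hεW (mem_ball_iff_norm.2 ?_))⟩
  refine hu.2.trans_lt (lt_of_le_of_lt ?_ hn)
  exact pow_le_pow_of_le_one (by positivity) (inv_le_one_of_one_le₀ hp.le) (by omega)

/-- For `n ≥ 2`, the group `higherUnits p n` is topologically generated by any element outside
`higherUnits p (n + 1)`. -/
theorem higherUnits_le_of_mem {n : ℕ} (hn : 2 ≤ n) {L : Subgroup ℚ_[p]ˣ}
    (hL : IsClosed (L : Set ℚ_[p]ˣ)) {x : ℚ_[p]ˣ} (hxL : x ∈ L)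
    (hx : x ∈ higherUnits p n) (hx' : x ∉ higherUnits p (n + 1)) : higherUnits p n ≤ L := by
  have hp : (1 : ℝ) < p := mod_cast (Fact.out : p.Prime).one_lt
  have hp0 : (0 : ℝ) < (p : ℝ)⁻¹ := by positivity
  have hp1 : (p : ℝ)⁻¹ < 1 := inv_lt_one_of_one_lt₀ hp
  have hdisc : ∀ (z : ℚ_[p]) (k : ℕ), ‖z‖ < (p : ℝ)⁻¹ ^ k → ‖z‖ ≤ (p : ℝ)⁻¹ ^ (k + 1) := by
    intro z k hz
    have := (Padic.norm_le_pow_iff_norm_lt_pow_add_one z (-((k : ℤ) + 1))).2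
    simp only [neg_add_rev, neg_add_cancel_comm] at this
    convert this ?_ using 1
    · rw [← neg_add_rev, zpow_neg, inv_pow]; norm_cast
    · rw [zpow_neg, zpow_natCast, ← inv_pow]; exact hz
  have hxn : ‖(x : ℚ_[p]) - 1‖ = (p : ℝ)⁻¹ ^ n :=
    le_antisymm hx.2 (not_lt.1 fun hlt => hx' ⟨hx.1, hdisc _ _ hlt⟩)
  have hpow : ∀ k, ∃ z ∈ L, ‖(z : ℚ_[p]) - 1‖ = (p : ℝ)⁻¹ ^ (n + k) := by
    intro k
    induction k with
    | zero => exact ⟨x, hxL, hxn⟩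
    | succ k ih =>
      obtain ⟨z, hzL, hz⟩ := ih
      refine ⟨z ^ p, L.pow_mem hzL p, ?_⟩
      rw [Units.val_pow_eq_pow_val, norm_pow_prime_sub_one, hz, ← pow_succ', add_assoc]
      rw [hz]
      exact pow_lt_self_of_lt_one₀ hp0 hp1 (by omega)
  intro w hw
  have happrox : ∀ k, ∃ l ∈ L, w / l ∈ higherUnits p (n + k) := by
    intro k
    induction k with
    | zero => exact ⟨1, L.one_mem, by simpa using hw⟩
    | succ k ih =>
      obtain ⟨l, hlL, hl⟩ := ih
      obtain ⟨z, hzL, hz⟩ := hpow k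
      have hz1 : ‖(z : ℚ_[p]) - 1‖ < 1 := hz ▸ pow_lt_one₀ hp0.le hp1 (by omega)
      have hzne : (z : ℚ_[p]) ≠ 1 := by
        rw [← sub_ne_zero, ← norm_pos_iff, hz]; positivity
      have hznorm := norm_eq_one_of_norm_sub_one_lt hz1
      obtain ⟨a, ha⟩ := exists_norm_sub_pow_lt hz1 hzne (hl.2.trans hz.ge)
      refine ⟨l * z ^ a, L.mul_mem hlL (L.pow_mem hzL a), ?_, ?_⟩
      · rw [← div_div, Units.val_div_eq_div_val, norm_div, hl.1]
        simp [hznorm]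
      · rw [← add_assoc]
        refine hdisc _ _ (lt_of_eq_of_lt ?_ (hz ▸ ha))
        have : ((w / (l * z ^ a) : ℚ_[p]ˣ) : ℚ_[p]) - 1
            = ((w / l : ℚ_[p]ˣ) - (z : ℚ_[p]) ^ a) / z ^ a := by
          rw [← div_div, Units.val_div_eq_div_val, sub_div,
            div_self (pow_ne_zero _ z.ne_zero), Units.val_pow_eq_pow_val]
        rw [this, norm_div, norm_pow, hznorm, one_pow, div_one]
  refine hL.mem_of_frequently_of_tendsto (f := (id : ℚ_[p]ˣ → ℚ_[p]ˣ)) (b := 𝓝 w) ?_ tendsto_id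
  refine frequently_iff.2 fun {U} hU => ?_
  have hV : (fun v : ℚ_[p]ˣ => w / v) ⁻¹' U ∈ 𝓝 1 := by
    have hc : Continuous fun v : ℚ_[p]ˣ => w / v := by fun_prop
    exact hc.tendsto 1 (by simpa using hU)
  obtain ⟨m, -, hm⟩ := exists_higherUnits_subset hV
  obtain ⟨l, hlL, hl⟩ := happrox m
  refine ⟨l, ?_, hlL⟩
  have hlm : w / l ∈ higherUnits p m :=
    ⟨hl.1, hl.2.trans (pow_le_pow_of_le_one hp0.le hp1.le (by omega))⟩
  simpa using hm hlm

theorem exists_mem_higherUnits_not_mem_succ {n : ℕ} (hn : 2 ≤ n) :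
    ∃ x ∈ higherUnits p n, x ∉ higherUnits p (n + 1) := by
  have hp : (1 : ℝ) < p := mod_cast (Fact.out : p.Prime).one_lt
  have hp0 : (0 : ℝ) < (p : ℝ)⁻¹ := by positivity
  have hp1 : (p : ℝ)⁻¹ < 1 := inv_lt_one_of_one_lt₀ hp
  have hnorm : ‖(1 + (p : ℚ_[p]) ^ n) - 1‖ = (p : ℝ)⁻¹ ^ n := by simp
  have hone := norm_eq_one_of_norm_sub_one_lt (hnorm ▸ pow_lt_one₀ hp0.le hp1 (by omega))
  have hne : 1 + (p : ℚ_[p]) ^ n ≠ 0 := norm_ne_zero_iff.1 (hone ▸ one_ne_zero)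
  refine ⟨Units.mk0 _ hne, ⟨hone, hnorm.le⟩, fun hmem => ?_⟩
  have := hmem.2
  rw [Units.val_mk0, hnorm] at this
  exact absurd this (not_le.2 (pow_lt_pow_right_of_lt_one₀ hp0 hp1 n.lt_succ_self))

theorem exists_mem_norm_ne_one {H : Subgroup ℚ_[p]ˣ} (hH : H.index ≠ 0) :
    ∃ h ∈ H, ‖(h : ℚ_[p])‖ ≠ 1 := by
  have hp : p.Prime := Fact.out
  have hp1 : (1 : ℝ) < p := mod_cast hp.one_lt
  have hp0 : (p : ℚ_[p]) ≠ 0 := mod_cast hp.ne_zero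
  refine ⟨Units.mk0 (p : ℚ_[p]) hp0 ^ H.index, H.pow_index_mem _, ?_⟩
  rw [Units.val_pow_eq_pow_val, Units.val_mk0, norm_pow, Padic.norm_p]
  exact (pow_lt_one₀ (by positivity) (inv_lt_one_of_one_lt₀ hp1) hH).ne

end Padic

theorem ChabautySpace.isOpen_singleton_padicUnits {p : ℕ} [Fact p.Prime]
    {H : ChabautySpace ℚ_[p]ˣ} (hH : IsOpen (H.1 : Set ℚ_[p]ˣ)) (hindex : H.1.index ≠ 0) :
    IsOpen {H} := by
  obtain ⟨h, hh, hnorm⟩ := Padic.exists_mem_norm_ne_one hindex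
  obtain ⟨C, hC, hcover⟩ := Padic.exists_isCompact_forall_exists_zpow_mul_mem hnorm
  obtain ⟨n, hn, hnH⟩ := Padic.exists_higherUnits_subset (hH.mem_nhds H.1.one_mem)
  obtain ⟨x, hx, hx'⟩ := Padic.exists_mem_higherUnits_not_mem_succ (p := p) hn
  refine isOpen_singleton_of_forall_exists_zpow_mul_mem hH (Padic.isOpen_higherUnits n) ?_
    hC hh hcover
  have hopen : IsOpen ((Padic.higherUnits p n : Set ℚ_[p]ˣ) \ Padic.higherUnits p (n + 1)) :=
    (Padic.isOpen_higherUnits n).sdiff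
      (Subgroup.isClosed_of_isOpen _ (Padic.isOpen_higherUnits (n + 1)))
  filter_upwards [(isOpen_setOf_inter_nonempty hopen).mem_nhds ⟨x, hnH hx, hx, hx'⟩]
    with L ⟨y, hyL, hy, hy'⟩
  exact Padic.higherUnits_le_of_mem hn L.2 hyL hy hy'

/-- A closed subgroup of `ℚ_pˣ` can be enlarged to an open subgroup of finite index that still
misses a given compact set disjoint from it. -/
theorem Padic.exists_isOpen_index_ne_zero_of_inter_eq_empty {p : ℕ} [Fact p.Prime]
    {H : Subgroup ℚ_[p]ˣ} (hH : IsClosed (H : Set ℚ_[p]ˣ)) {K : Set ℚ_[p]ˣ}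
    (hK : IsCompact K) (hHK : (H : Set ℚ_[p]ˣ) ∩ K = ∅) :
    ∃ L : Subgroup ℚ_[p]ˣ, H ≤ L ∧ IsOpen (L : Set ℚ_[p]ˣ) ∧ L.index ≠ 0 ∧
      (L : Set ℚ_[p]ˣ) ∩ K = ∅ := by
  have hKH : K ⊆ (H : Set ℚ_[p]ˣ)ᶜ := fun x hxK hxH => hHK.subset ⟨hxH, hxK⟩
  obtain ⟨V, hV, hKV⟩ := compact_open_separated_mul_right hK hH.isOpen_compl hKH
  obtain ⟨n, -, hnV⟩ := Padic.exists_higherUnits_subset hV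
  set M := H ⊔ Padic.higherUnits p n
  have hMopen : IsOpen (M : Set ℚ_[p]ˣ) :=
    Subgroup.isOpen_mono le_sup_right (Padic.isOpen_higherUnits n)
  have hMK : ∀ x ∈ M, x ∉ K := by
    intro x hxM hxK
    obtain ⟨a, ha, u, hu, rfl⟩ := Subgroup.mem_sup.1 hxM
    refine hKV (mul_mem_mul hxK (hnV ((Padic.higherUnits p n).inv_mem hu))) ?_
    simpa using ha
  have hfinite : ∀ L : Subgroup ℚ_[p]ˣ, IsOpen (L : Set ℚ_[p]ˣ) →
      ∀ h ∈ L, ‖(h : ℚ_[p])‖ ≠ 1 → L.index ≠ 0 := by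
    intro L hL h hh hnorm
    obtain ⟨C, hC, hcover⟩ := Padic.exists_isCompact_forall_exists_zpow_mul_mem hnorm
    exact L.index_ne_zero_of_forall_exists_zpow_mul_mem hL hC hh hcover
  by_cases hnorm : ∃ h ∈ M, ‖(h : ℚ_[p])‖ ≠ 1
  · obtain ⟨h, hh, hne⟩ := hnorm
    exact ⟨M, le_sup_left, hMopen, hfinite M hMopen h hh hne,
      eq_empty_of_forall_notMem fun x hx => hMK x hx.1 hx.2⟩
  push Not at hnorm
  obtain ⟨A, hA⟩ := hK.exists_bound_of_continuousOn
    (f := fun x : ℚ_[p]ˣ => (x : ℚ_[p])) Units.continuous_val.continuousOn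
  obtain ⟨B, hB⟩ := hK.exists_bound_of_continuousOn
    (f := fun x : ℚ_[p]ˣ => ((x⁻¹ : ℚ_[p]ˣ) : ℚ_[p])) Units.continuous_coe_inv.continuousOn
  obtain ⟨y, hy⟩ := NormedField.exists_lt_norm ℚ_[p] (max 1 (max A B))
  simp only [max_lt_iff] at hy
  obtain ⟨hy1, hyA, hyB⟩ := hy
  set g := Units.mk0 y (norm_pos_iff.1 (one_pos.trans hy1)) with hg
  have hopen : IsOpen ((M ⊔ Subgroup.zpowers g : Subgroup ℚ_[p]ˣ) : Set ℚ_[p]ˣ) :=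
    Subgroup.isOpen_mono le_sup_left hMopen
  refine ⟨M ⊔ Subgroup.zpowers g, le_sup_left.trans le_sup_left, hopen,
    hfinite _ hopen g (le_sup_right (a := M) (Subgroup.mem_zpowers g)) hy1.ne',
    eq_empty_of_forall_notMem ?_⟩
  rintro x ⟨hx, hxK⟩
  obtain ⟨a, ha, b, hb, rfl⟩ := Subgroup.mem_sup.1 hx
  obtain ⟨j, rfl⟩ := Subgroup.mem_zpowers_iff.1 hb
  have hAj := hA _ hxK
  have hBj := hB _ hxK
  simp only [Units.val_mul, mul_inv, Units.val_inv_eq_inv_val, Units.val_zpow_eq_zpow_val,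
    norm_mul, norm_inv, norm_zpow, hnorm a ha, one_mul, inv_one, hg, Units.val_mk0] at hAj hBj
  rw [← zpow_neg] at hBj
  have hj1 : j < 1 := (zpow_lt_zpow_iff_right₀ hy1).1 (by rw [zpow_one]; exact hAj.trans_lt hyA)
  have hj2 : -j < 1 := (zpow_lt_zpow_iff_right₀ hy1).1 (by rw [zpow_one]; exact hBj.trans_lt hyB)
  obtain rfl : j = 0 := by omega
  exact hMK a ha (by simpa using hxK)

/-- The Chabauty space of `ℚ_p^×` is a proper compactification of `ℕ`, identified with the
set `N` of open finite-index subgroups: `C(G)` is compact metrizable and `N` is an open,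
countable, dense, discrete subset. -/
theorem chabauty_padicUnits_proper_compactification (p : ℕ) [Fact p.Prime] :
    CompactSpace (ChabautySpace ℚ_[p]ˣ) ∧
    TopologicalSpace.MetrizableSpace (ChabautySpace ℚ_[p]ˣ) ∧
    IsOpen {H : ChabautySpace ℚ_[p]ˣ | IsOpen (H.1 : Set ℚ_[p]ˣ) ∧ H.1.index ≠ 0} ∧
    Set.Countable {H : ChabautySpace ℚ_[p]ˣ | IsOpen (H.1 : Set ℚ_[p]ˣ) ∧ H.1.index ≠ 0} ∧
    Dense {H : ChabautySpace ℚ_[p]ˣ | IsOpen (H.1 : Set ℚ_[p]ˣ) ∧ H.1.index ≠ 0} ∧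
    DiscreteTopology {H : ChabautySpace ℚ_[p]ˣ | IsOpen (H.1 : Set ℚ_[p]ˣ) ∧ H.1.index ≠ 0} := by
  have hemb : IsOpenEmbedding (Units.val : ℚ_[p]ˣ → ℚ_[p]) := Units.isOpenEmbedding_val
  have : SecondCountableTopology ℚ_[p]ˣ := hemb.isEmbedding.secondCountableTopology
  have hdiscrete : DiscreteTopology
      {H : ChabautySpace ℚ_[p]ˣ | IsOpen (H.1 : Set ℚ_[p]ˣ) ∧ H.1.index ≠ 0} := by
    refine discreteTopology_iff_isOpen_singleton.2 fun H => ?_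
    rw [← Subtype.val_injective.preimage_image {H}, image_singleton]
    exact (ChabautySpace.isOpen_singleton_padicUnits H.2.1 H.2.2).preimage
      continuous_subtype_val
  refine ⟨inferInstance, inferInstance, ?_, ?_, ?_, hdiscrete⟩
  · refine isOpen_iff_forall_mem_open.2 fun H hH => ?_
    exact ⟨{H}, singleton_subset_iff.2 hH,
      ChabautySpace.isOpen_singleton_padicUnits hH.1 hH.2, rfl⟩
  · exact countable_coe_iff.1 (TopologicalSpace.separableSpace_iff_countable.1 inferInstance)
  · refine fun H => mem_closure_iff.2 fun W hW hHW => ?_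
    obtain ⟨K, hK, hHK, hKW⟩ := ChabautySpace.exists_isCompact_of_isOpen hW hHW
    obtain ⟨L, hHL, hL, hindex, hLK⟩ :=
      Padic.exists_isOpen_index_ne_zero_of_inter_eq_empty H.2 hK hHK
    exact ⟨⟨L, L.isClosed_of_isOpen hL⟩, hKW _ hHL hLK, hL, hindex⟩
end

section
/- Let G = ℚ_2^× be the multiplicative group of the field of 2-adic numbers, and let N be the set of open finite-index subgroups of G. Then C(G) ∖ N is homeomorphic to the space obtained by glueing [2] × ℕ̄ onto the Cantor space C: that is, there exist 2 distinct points c_1, c_2 of C such that C(G) ∖ N is homeomorphic to the quotient of the disjoint union C ⊔ ([2] × ℕ̄) obtained by identifying, for each i ∈ {1,2}, the accumulation point (i, ∞) with c_i. -/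
open OnePoint

namespace DyadicChabauty

open Filter Topology

/-! ### Arithmetic of dyadic integers -/

theorem exists_coe_eq {x : ℚ_[2]} (hx : ‖x‖ ≤ 1) : ∃ a : ℤ_[2], (a : ℚ_[2]) = x := ⟨⟨x, hx⟩, rfl⟩

@[simp, norm_cast]
theorem coe_two : ((2 : ℤ_[2]) : ℚ_[2]) = 2 := rfl

theorem even_or_odd (a : ℤ_[2]) : ∃ b, a = 2 * b ∨ a = 1 + 2 * b := by
  obtain ⟨n, hn, h⟩ := PadicInt.exists_mem_range (p := 2) a
  rw [PadicInt.maximalIdeal_eq_span_p, Ideal.mem_span_singleton'] at h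
  obtain ⟨b, hb⟩ := h
  refine ⟨b, ?_⟩
  interval_cases n
  · left; push_cast at hb; linear_combination -hb
  · right; push_cast at hb; linear_combination -hb

theorem norm_two : ‖(2 : ℤ_[2])‖ = 1 / 2 := by
  have := PadicInt.norm_p (p := 2)
  simpa using this

theorem norm_one_add_two_mul (a : ℤ_[2]) : ‖1 + 2 * a‖ = 1 := by
  have h : ‖2 * a‖ < 1 := by
    rw [norm_mul, norm_two]
    have := PadicInt.norm_le_one a
    linarith
  rw [PadicInt.norm_add_eq_max_of_ne] <;> rw [norm_one]
  · exact max_eq_left h.le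
  · exact h.ne'

theorem one_add_two_mul_ne (a b : ℤ_[2]) : 1 + 2 * a ≠ 2 * b := by
  intro h
  have h1 := norm_one_add_two_mul a
  rw [h, norm_mul, norm_two] at h1
  have := PadicInt.norm_le_one b
  linarith

theorem one_add_two_mul_ne_zero (a : ℤ_[2]) : 1 + 2 * a ≠ 0 := by
  simpa using one_add_two_mul_ne a 0

theorem exists_eq_one_add_of_norm {x : ℚ_[2]} (hx : ‖x‖ = 1) : ∃ a : ℤ_[2], x = 1 + 2 * a := by
  obtain ⟨y, rfl⟩ := exists_coe_eq hx.le
  obtain ⟨b, hb⟩ := even_or_odd y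
  rcases hb with hb | hb
  · exfalso
    rw [PadicInt.padic_norm_e_of_padicInt, hb, norm_mul, norm_two] at hx
    have := PadicInt.norm_le_one b
    linarith
  · exact ⟨b, by rw [hb]; push_cast; rfl⟩

theorem norm_two_rat : ‖(2 : ℚ_[2])‖ = 1 / 2 := norm_two

theorem norm_odd (a : ℤ_[2]) : ‖(1 + 2 * a : ℚ_[2])‖ = 1 := norm_one_add_two_mul a

theorem exists_eq_zpow_mul {x : ℚ_[2]} (hx : x ≠ 0) :
    ∃ a : ℤ_[2], x = 2 ^ x.valuation * (1 + 2 * a) := by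
  have h2 : (2 : ℚ_[2]) ^ x.valuation ≠ 0 := zpow_ne_zero _ two_ne_zero
  have h : ‖x / 2 ^ x.valuation‖ = 1 := by
    rw [norm_div, norm_zpow, norm_two_rat, Padic.norm_eq_zpow_neg_valuation hx, zpow_neg]
    have : (2 : ℝ) ^ x.valuation ≠ 0 := zpow_ne_zero _ (by norm_num)
    simp [this]
  obtain ⟨a, ha⟩ := exists_eq_one_add_of_norm h
  exact ⟨a, by rw [← ha]; field_simp⟩

theorem exists_eq_pow_mul {x : ℤ_[2]} (hx : x ≠ 0) :
    ∃ a : ℤ_[2], x = 2 ^ x.valuation * (1 + 2 * a) := by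
  obtain ⟨a, ha⟩ := exists_eq_zpow_mul (x := (x : ℚ_[2])) (by simpa using hx)
  refine ⟨a, Subtype.coe_injective ?_⟩
  rw [PadicInt.valuation_coe] at ha
  simpa using ha

theorem valuation_pow_mul (n : ℕ) (a : ℤ_[2]) : (2 ^ n * (1 + 2 * a)).valuation = n := by
  have h0 : (1 + 2 * a).valuation = 0 := by
    have h := PadicInt.norm_eq_zpow_neg_valuation (one_add_two_mul_ne_zero a)
    rw [norm_one_add_two_mul] at h
    by_contra hne
    have h2 : (((2 : ℕ) : ℝ) ^ (-((1 + 2 * a).valuation : ℤ))) < 1 := by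
      apply zpow_lt_one_of_neg₀ (by norm_num)
      omega
    linarith
  have := PadicInt.valuation_p_pow_mul (p := 2) n _ (one_add_two_mul_ne_zero a)
  push_cast at this
  rw [this, h0, add_zero]

/-! ### Principal congruence subgroups -/

/-- The units of `ℤ_2` congruent to `1` modulo `2 ^ n`. -/
def congruence (n : ℕ) : Subgroup ℚ_[2]ˣ where
  carrier := {u | ‖(u : ℚ_[2])‖ = 1 ∧ ∃ a : ℤ_[2], (u : ℚ_[2]) = 1 + 2 ^ n * a}
  one_mem' := ⟨by simp, 0, by simp⟩
  mul_mem' := by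
    rintro u v ⟨hu, a, ha⟩ ⟨hv, b, hb⟩
    refine ⟨by simp [hu, hv], a + b + 2 ^ n * a * b, ?_⟩
    push_cast
    rw [ha, hb]
    ring
  inv_mem' := by
    rintro u ⟨hu, a, ha⟩
    have h1 : ‖((u⁻¹ : ℚ_[2]ˣ) : ℚ_[2])‖ = 1 := by simp [hu]
    obtain ⟨w, hw⟩ := exists_coe_eq h1.le
    refine ⟨h1, -a * w, ?_⟩
    have h2 : (u : ℚ_[2]) * ((u⁻¹ : ℚ_[2]ˣ) : ℚ_[2]) = 1 := by simp
    rw [PadicInt.coe_mul, PadicInt.coe_neg, hw]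
    linear_combination h2 - ((u⁻¹ : ℚ_[2]ˣ) : ℚ_[2]) * ha

theorem mem_congruence_of_eq {n : ℕ} (hn : 1 ≤ n) {u : ℚ_[2]ˣ} {a : ℤ_[2]}
    (h : (u : ℚ_[2]) = 1 + 2 ^ n * a) : u ∈ congruence n := by
  refine ⟨?_, a, h⟩
  obtain ⟨m, rfl⟩ := Nat.exists_eq_add_of_le hn
  have h1 : (u : ℚ_[2]) = 1 + 2 * (2 ^ m * a : ℤ_[2]) := by
    rw [h]
    push_cast
    ring
  rw [h1]
  exact norm_odd _

theorem congruence_anti {m n : ℕ} (h : m ≤ n) : congruence n ≤ congruence m := by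
  rintro u ⟨hu, a, ha⟩
  obtain ⟨k, rfl⟩ := Nat.exists_eq_add_of_le h
  refine ⟨hu, 2 ^ k * a, ?_⟩
  push_cast
  rw [ha]
  ring

theorem eq_of_coe {a b : ℤ_[2]} (h : (a : ℚ_[2]) = b) : a = b := Subtype.coe_injective h

theorem congruence_of_norm_sub {n : ℕ} {u : ℚ_[2]ˣ} (hn : 1 ≤ n)
    (h : ‖(u : ℚ_[2]) - 1‖ ≤ (1 / 2) ^ n) : u ∈ congruence n := by
  have h2 : ‖((u : ℚ_[2]) - 1) / 2 ^ n‖ ≤ 1 := by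
    rw [norm_div, norm_pow, norm_two_rat]
    exact div_le_one_of_le₀ h (by positivity)
  refine mem_congruence_of_eq hn (a := ⟨_, h2⟩) ?_
  have : (2 : ℚ_[2]) ^ n ≠ 0 := pow_ne_zero _ two_ne_zero
  simp only
  field_simp
  ring

theorem norm_sub_of_mem_congruence {n : ℕ} {u : ℚ_[2]ˣ} (h : u ∈ congruence n) :
    ‖(u : ℚ_[2]) - 1‖ ≤ (1 / 2) ^ n := by
  obtain ⟨-, a, ha⟩ := h
  rw [ha, add_sub_cancel_left, norm_mul, norm_pow, norm_two_rat]
  exact mul_le_of_le_one_right (by positivity) a.2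

theorem isOpen_congruence (n : ℕ) : IsOpen (congruence n : Set ℚ_[2]ˣ) := by
  have : congruence (n + 1) ≤ congruence n := congruence_anti (Nat.le_succ n)
  refine Subgroup.isOpen_mono this ?_
  apply Subgroup.isOpen_of_mem_nhds (g := 1)
  have hc : Tendsto (fun u : ℚ_[2]ˣ => ‖(u : ℚ_[2]) - 1‖) (𝓝 1) (𝓝 0) := by
    have : Continuous (fun u : ℚ_[2]ˣ => ‖(u : ℚ_[2]) - 1‖) :=
      (Units.continuous_val.sub continuous_const).norm
    simpa using this.tendsto 1
  filter_upwards [hc.eventually (gt_mem_nhds (show (0 : ℝ) < (1 / 2) ^ (n + 1) by positivity))]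
    with u hu
  exact congruence_of_norm_sub (by omega) hu.le

theorem exists_congruence_subset {x : ℚ_[2]ˣ} {U : Set ℚ_[2]ˣ} (hU : U ∈ 𝓝 x) :
    ∃ N, ∀ n ≥ N, ∀ v ∈ congruence n, x * v ∈ U := by
  have h1 : (fun v => x * v) ⁻¹' U ∈ 𝓝 (1 : ℚ_[2]ˣ) := by
    apply (continuous_const_mul x).continuousAt.preimage_mem_nhds
    simpa using hU
  rw [Units.isEmbedding_val₀.nhds_eq_comap, Filter.mem_comap] at h1
  obtain ⟨t, ht, hsub⟩ := h1
  obtain ⟨ε, hε, hball⟩ := Metric.mem_nhds_iff.1 ht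
  obtain ⟨N, hN⟩ := exists_pow_lt_of_lt_one hε (show (1 / 2 : ℝ) < 1 by norm_num)
  refine ⟨N, fun n hn v hv => hsub (hball ?_)⟩
  have := norm_sub_of_mem_congruence hv
  rw [Metric.mem_ball, dist_eq_norm, Units.val_one]
  exact this.trans_lt ((pow_le_pow_of_le_one (by norm_num) (by norm_num) hn).trans_lt hN)


/-! ### Closed subgroups containing a nontrivial unit -/

theorem exists_pow_two_pow {n : ℕ} (hn : 2 ≤ n) {g : ℚ_[2]ˣ} {a : ℤ_[2]}
    (ha : (g : ℚ_[2]) = 1 + 2 ^ n * (1 + 2 * a)) (k : ℕ) :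
    ∃ b : ℤ_[2], ((g ^ 2 ^ k : ℚ_[2]ˣ) : ℚ_[2]) = 1 + 2 ^ (n + k) * (1 + 2 * b) := by
  induction k with
  | zero => exact ⟨a, by simpa using ha⟩
  | succ k ih =>
    obtain ⟨b, hb⟩ := ih
    obtain ⟨m, rfl⟩ := Nat.exists_eq_add_of_le hn
    refine ⟨b + 2 ^ (m + k) * (1 + 2 * b) ^ 2, ?_⟩
    rw [pow_succ, pow_mul, Units.val_pow_eq_pow_val, hb]
    push_cast
    ring

theorem mem_congruence_succ_mul {n : ℕ} (hn : 1 ≤ n) {u v : ℚ_[2]ˣ} {a b : ℤ_[2]}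
    (hu : (u : ℚ_[2]) = 1 + 2 ^ n * (1 + 2 * a)) (hv : (v : ℚ_[2]) = 1 + 2 ^ n * (1 + 2 * b)) :
    u * v ∈ congruence (n + 1) := by
  obtain ⟨m, rfl⟩ := Nat.exists_eq_add_of_le hn
  refine mem_congruence_of_eq (by omega)
    (a := 1 + a + b + 2 ^ m * (1 + 2 * a) * (1 + 2 * b)) ?_
  rw [Units.val_mul, hu, hv]
  push_cast
  ring

theorem mem_congruence_succ_or {n : ℕ} (hn : 1 ≤ n) {u : ℚ_[2]ˣ} (hu : u ∈ congruence n) :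
    u ∈ congruence (n + 1) ∨ ∃ a : ℤ_[2], (u : ℚ_[2]) = 1 + 2 ^ n * (1 + 2 * a) := by
  obtain ⟨-, a, ha⟩ := hu
  obtain ⟨b, rfl | rfl⟩ := even_or_odd a
  · left
    refine mem_congruence_of_eq (by omega) (a := b) ?_
    rw [ha]
    push_cast
    ring
  · right
    exact ⟨b, by rw [ha]; push_cast; ring⟩

theorem congruence_le_of_mem {H : Subgroup ℚ_[2]ˣ} (hH : IsClosed (H : Set ℚ_[2]ˣ)) {n : ℕ}
    (hn : 2 ≤ n) {g : ℚ_[2]ˣ} (hg : g ∈ H) {a : ℤ_[2]}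
    (ha : (g : ℚ_[2]) = 1 + 2 ^ n * (1 + 2 * a)) : congruence n ≤ H := by
  intro x hx
  have key : ∀ k, ∃ h ∈ H, x * h ∈ congruence (n + k) := by
    intro k
    induction k with
    | zero => exact ⟨1, H.one_mem, by simpa using hx⟩
    | succ k ih =>
      obtain ⟨h, hh, hk⟩ := ih
      rcases mem_congruence_succ_or (show 1 ≤ n + k by omega) hk with hk | ⟨c, hc⟩
      · exact ⟨h, hh, hk⟩
      · obtain ⟨b, hb⟩ := exists_pow_two_pow hn ha k
        refine ⟨h * g ^ 2 ^ k, H.mul_mem hh (H.pow_mem hg _), ?_⟩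
        rw [← mul_assoc]
        exact mem_congruence_succ_mul (show 1 ≤ n + k by omega) hc hb
  by_contra hxH
  obtain ⟨N, hN⟩ := exists_congruence_subset (hH.isOpen_compl.mem_nhds hxH)
  obtain ⟨h, hh, hk⟩ := key N
  have := hN (n + N) (by omega) _ (inv_mem hk)
  apply this
  simpa using hh

theorem exists_eq_of_mem_congruence {n : ℕ} {u : ℚ_[2]ˣ} (hu : u ∈ congruence n) (h1 : u ≠ 1) :
    ∃ m ≥ n, ∃ a : ℤ_[2], (u : ℚ_[2]) = 1 + 2 ^ m * (1 + 2 * a) := by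
  obtain ⟨-, b, hb⟩ := hu
  have hb0 : b ≠ 0 := by
    rintro rfl
    apply h1
    ext
    simpa using hb
  obtain ⟨a, ha⟩ := exists_eq_pow_mul hb0
  refine ⟨n + b.valuation, by omega, a, ?_⟩
  have h : (b : ℚ_[2]) = 2 ^ b.valuation * (1 + 2 * a) := by
    conv_lhs => rw [ha]
    push_cast
    rfl
  rw [hb, h]
  ring

theorem mem_congruence_two_or_neg {u : ℚ_[2]ˣ} (hu : ‖(u : ℚ_[2])‖ = 1) :
    u ∈ congruence 2 ∨ -u ∈ congruence 2 := by
  obtain ⟨b, hb⟩ := exists_eq_one_add_of_norm hu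
  obtain ⟨a, rfl | rfl⟩ := even_or_odd b
  · left
    refine mem_congruence_of_eq (by omega) (a := a) ?_
    rw [hb]
    push_cast
    ring
  · right
    refine mem_congruence_of_eq (by omega) (a := -1 - a) ?_
    rw [Units.val_neg, hb]
    push_cast
    ring

theorem neg_notMem_congruence {n : ℕ} (hn : 2 ≤ n) {u : ℚ_[2]ˣ} (hu : u ∈ congruence n) :
    -u ∉ congruence n := by
  obtain ⟨-, a, ha⟩ := congruence_anti hn hu
  intro h
  obtain ⟨-, b, hb⟩ := congruence_anti hn h
  rw [Units.val_neg, ha] at hb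
  apply one_add_two_mul_ne (a + b) 0
  apply eq_of_coe
  push_cast
  linear_combination -hb / 2

theorem neg_one_notMem_congruence {n : ℕ} (hn : 2 ≤ n) : (-1 : ℚ_[2]ˣ) ∉ congruence n :=
  neg_notMem_congruence hn (one_mem _)

theorem congruence_le_of_unit_mem {H : Subgroup ℚ_[2]ˣ} (hH : IsClosed (H : Set ℚ_[2]ˣ))
    {u : ℚ_[2]ˣ} (hu : u ∈ H) (hu1 : ‖(u : ℚ_[2])‖ = 1) (h1 : u ≠ 1) (h2 : u ≠ -1) :
    ∃ n ≥ 2, congruence n ≤ H := by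
  rcases mem_congruence_two_or_neg hu1 with h | h
  · obtain ⟨m, hm, a, ha⟩ := exists_eq_of_mem_congruence h h1
    exact ⟨m, hm, congruence_le_of_mem hH hm hu ha⟩
  · obtain ⟨m, hm, a, ha⟩ := exists_eq_of_mem_congruence h (by rwa [Ne, neg_eq_iff_eq_neg])
    obtain ⟨b, hb⟩ := exists_pow_two_pow hm ha 1
    refine ⟨m + 1, by omega, congruence_le_of_mem hH (by omega) (g := u ^ 2) (pow_mem hu 2) ?_
      (a := b)⟩
    simpa using hb

/-! ### The subgroups which are neither open nor trivial on units -/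

theorem finite_index_of_congruence_le {H : Subgroup ℚ_[2]ˣ} {n : ℕ} (hn2 : 1 ≤ n)
    (hn : congruence n ≤ H)
    {h : ℚ_[2]ˣ} (hh : h ∈ H) (h1 : ‖(h : ℚ_[2])‖ ≠ 1) : H.index ≠ 0 := by
  have hv : (h : ℚ_[2]).valuation ≠ 0 := by
    intro h0
    apply h1
    rw [Padic.norm_eq_zpow_neg_valuation h.ne_zero, h0]
    simp
  set m := (h : ℚ_[2]).valuation with hm
  let rep : Fin m.natAbs × Fin (2 ^ n) → ℚ_[2]ˣ ⧸ H := fun p =>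
    if hp : (p.2 : ℕ) = 0 then 1 else
      QuotientGroup.mk (Units.mk0 ((2 : ℚ_[2]) ^ (p.1 : ℕ) * ((p.2 : ℕ) : ℚ_[2]))
        (by simp [hp]))
  have hsurj : Function.Surjective rep := by
    intro q
    obtain ⟨x, rfl⟩ := QuotientGroup.mk_surjective q
    set k := (x : ℚ_[2]).valuation with hk
    set y := x * h ^ (-(k / m)) with hy
    have hyv : (y : ℚ_[2]).valuation = k % m := by
      rw [hy, Units.val_mul, Padic.valuation_mul x.ne_zero (Units.ne_zero _),
        Units.val_zpow_eq_zpow_val, Padic.valuation_zpow, ← hm, ← hk]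
      have := Int.emod_add_mul_ediv k m
      linarith
    obtain ⟨a, ha⟩ := exists_eq_zpow_mul y.ne_zero
    rw [hyv] at ha
    have hr0 := Int.emod_nonneg k hv
    have hr1 := Int.emod_lt_abs k hv
    obtain ⟨j, hj⟩ := Int.eq_ofNat_of_zero_le hr0
    rw [hj, zpow_natCast] at ha
    have hjm : j < m.natAbs := by rw [← Int.natCast_natAbs] at hr1; omega
    obtain ⟨c, hc⟩ := Ideal.mem_span_singleton'.1 (PadicInt.appr_spec n (1 + 2 * a))
    set i := (1 + 2 * a).appr n with hi
    have hi0 : i ≠ 0 := by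
      intro h0
      obtain ⟨l, rfl⟩ := Nat.exists_eq_add_of_le hn2
      apply one_add_two_mul_ne a (2 ^ l * c)
      rw [h0] at hc
      push_cast at hc
      linear_combination -hc
    refine ⟨(⟨j, hjm⟩, ⟨i, PadicInt.appr_lt _ _⟩), ?_⟩
    simp only [rep, hi0, dite_false]
    rw [eq_comm, QuotientGroup.eq]
    set r := Units.mk0 ((2 : ℚ_[2]) ^ j * (i : ℚ_[2])) (by simp [hi0]) with hr
    suffices hyr : y⁻¹ * r ∈ H by
      have h2 : x⁻¹ * r = h ^ (-(k / m)) * (y⁻¹ * r) := by rw [hy]; group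
      rw [h2]
      exact H.mul_mem (H.zpow_mem hh _) hyr
    apply hn
    obtain ⟨w, hw⟩ := exists_coe_eq (x := (1 + 2 * a : ℚ_[2])⁻¹) (by rw [norm_inv, norm_odd]; simp)
    have hodd : (1 + 2 * a : ℚ_[2]) ≠ 0 := by
      intro h0
      have := norm_odd a
      simp [h0] at this
    refine mem_congruence_of_eq hn2 (a := -c * w) ?_
    have hc' : (c : ℚ_[2]) * 2 ^ n = 1 + 2 * a - i := by
      have := congrArg (fun z : ℤ_[2] => (z : ℚ_[2])) hc
      simpa using this
    rw [Units.val_mul, Units.val_inv_eq_inv_val, ha, hr, Units.val_mk0, PadicInt.coe_mul, hw]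
    push_cast
    have : (2 : ℚ_[2]) ^ j ≠ 0 := pow_ne_zero _ two_ne_zero
    field_simp
    linear_combination hc'
  have : Finite (ℚ_[2]ˣ ⧸ H) := Finite.of_surjective rep hsurj
  exact Subgroup.index_ne_zero_of_finite


/-! ### The two families of subgroups -/

/-- The trivial group for `b = false`, the group `{1, -1}` for `b = true`. -/
def signs (b : Bool) : Subgroup ℚ_[2]ˣ where
  carrier := {l | l = 1 ∨ b = true ∧ l = -1}
  one_mem' := Or.inl rfl
  mul_mem' := by
    rintro u v (rfl | ⟨hb, rfl⟩) (rfl | ⟨hb', rfl⟩) <;> simp_all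
  inv_mem' := by
    rintro u (rfl | ⟨hb, rfl⟩) <;> simp_all

theorem mem_signs {b : Bool} {l : ℚ_[2]ˣ} : l ∈ signs b ↔ l = 1 ∨ b = true ∧ l = -1 := Iff.rfl

theorem norm_of_mem_signs {b : Bool} {l : ℚ_[2]ˣ} (h : l ∈ signs b) : ‖(l : ℚ_[2])‖ = 1 := by
  rcases h with rfl | ⟨-, rfl⟩ <;> simp

theorem zpow_exponent_eq_zero {x l : ℚ_[2]ˣ} {k : ℤ} (h : (x : ℚ_[2]) = l * 0 ^ k) : k = 0 := by
  by_contra hk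
  rw [zero_zpow _ hk, mul_zero] at h
  exact x.ne_zero h

/-- The subgroup generated by `signs b` and by `g` if `g ≠ 0`. -/
def thin (b : Bool) (g : ℚ_[2]) : Subgroup ℚ_[2]ˣ where
  carrier := {x | ∃ k : ℤ, ∃ l ∈ signs b, (x : ℚ_[2]) = l * g ^ k}
  one_mem' := ⟨0, 1, one_mem _, by simp⟩
  mul_mem' := by
    rintro x y ⟨k, l, hl, hx⟩ ⟨j, m, hm, hy⟩
    refine ⟨k + j, l * m, mul_mem hl hm, ?_⟩
    have : g ^ (k + j) = g ^ k * g ^ j := by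
      by_cases hg : g = 0
      · subst hg
        rw [zpow_exponent_eq_zero hx, zpow_exponent_eq_zero hy]
        simp
      · exact zpow_add₀ hg _ _
    rw [Units.val_mul, hx, hy, this, Units.val_mul]
    ring
  inv_mem' := by
    rintro x ⟨k, l, hl, hx⟩
    refine ⟨-k, l⁻¹, inv_mem hl, ?_⟩
    rw [Units.val_inv_eq_inv_val, hx, mul_inv, zpow_neg, Units.val_inv_eq_inv_val]

theorem mem_signs_of_mem_thin {b : Bool} {g : ℚ_[2]} (hg : ‖g‖ < 1) {x : ℚ_[2]ˣ}
    (hx : x ∈ thin b g) (h1 : ‖(x : ℚ_[2])‖ = 1) : x ∈ signs b := by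
  obtain ⟨k, l, hl, h⟩ := hx
  have hk : k = 0 := by
    by_cases hg0 : g = 0
    · subst hg0
      exact zpow_exponent_eq_zero h
    · rw [h, norm_mul, norm_of_mem_signs hl, one_mul, norm_zpow] at h1
      exact (zpow_eq_one_iff_right₀ (norm_nonneg g) hg.ne).1 h1
  subst hk
  have : x = l := by
    ext
    simpa using h
  rwa [this]

theorem signs_le_thin (b : Bool) (g : ℚ_[2]) : signs b ≤ thin b g :=
  fun l hl => ⟨0, l, hl, by simp⟩

theorem mem_thin_self (b : Bool) (g : ℚ_[2]ˣ) : g ∈ thin b g :=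
  ⟨1, 1, one_mem _, by simp⟩

theorem thin_le {b : Bool} {g : ℚ_[2]} {H : Subgroup ℚ_[2]ˣ} (hs : signs b ≤ H)
    (hg : ∀ u : ℚ_[2]ˣ, (u : ℚ_[2]) = g → u ∈ H) : thin b g ≤ H := by
  rintro x ⟨k, l, hl, hx⟩
  by_cases hg0 : g = 0
  · subst hg0
    have hk := zpow_exponent_eq_zero hx
    have : x = l := by
      ext
      simpa [hk] using hx
    exact this ▸ hs hl
  · have : x = l * Units.mk0 g hg0 ^ k := by
      ext
      simpa using hx
    rw [this]
    exact mul_mem (hs hl) (zpow_mem (hg _ rfl) _)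

/-- The subgroup `V ∪ c⁻¹ V`, where `c² ∈ V`. -/
def doubled {G : Type*} [CommGroup G] (V : Subgroup G) (c : G) (hc : c * c ∈ V) : Subgroup G where
  carrier := {x | x ∈ V ∨ c * x ∈ V}
  one_mem' := Or.inl V.one_mem
  mul_mem' := by
    rintro x y (hx | hx) (hy | hy)
    · exact Or.inl (mul_mem hx hy)
    · right
      rw [mul_left_comm]
      exact mul_mem hx hy
    · right
      rw [← mul_assoc]
      exact mul_mem hx hy
    · left
      have : x * y = (c * c)⁻¹ * ((c * x) * (c * y)) := by
        rw [mul_mul_mul_comm, inv_mul_cancel_left]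
      rw [this]
      exact mul_mem (inv_mem hc) (mul_mem hx hy)
  inv_mem' := by
    rintro x (hx | hx)
    · exact Or.inl (inv_mem hx)
    · right
      have : c * x⁻¹ = (c * c) * (c * x)⁻¹ := by
        rw [mul_inv_rev, mul_comm x⁻¹, ← mul_assoc, mul_inv_cancel_right]
      rw [this]
      exact mul_mem hc (inv_mem hx)

/-- The unit `1 + 2 ^ (m + 1)`. -/
noncomputable def oneAdd (m : ℕ) : ℚ_[2]ˣ :=
  Units.mk0 (1 + 2 ^ (m + 1)) (by
    intro h
    have := norm_odd (2 ^ m)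
    rw [show (1 + 2 * ((2 ^ m : ℤ_[2]) : ℚ_[2])) = 1 + 2 ^ (m + 1) by push_cast; ring, h] at this
    simp at this)

theorem coe_oneAdd (m : ℕ) : (oneAdd m : ℚ_[2]) = 1 + 2 ^ (m + 1) := rfl

theorem oneAdd_mem_congruence {m n : ℕ} : oneAdd m ∈ congruence n ↔ n ≤ m + 1 := by
  constructor
  · rintro ⟨-, a, ha⟩
    by_contra! h
    obtain ⟨k, rfl⟩ := Nat.exists_eq_add_of_lt h
    apply one_add_two_mul_ne 0 (2 ^ k * a)
    apply eq_of_coe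
    have h2 : (2 : ℚ_[2]) ^ (m + 1) ≠ 0 := pow_ne_zero _ two_ne_zero
    apply mul_left_cancel₀ h2
    rw [coe_oneAdd] at ha
    push_cast
    linear_combination ha
  · intro h
    obtain ⟨k, hk⟩ := Nat.exists_eq_add_of_le h
    refine congruence_anti h (mem_congruence_of_eq (by omega) (a := 1) ?_)
    rw [coe_oneAdd]
    simp

theorem oneAdd_mul_self_mem (m : ℕ) : oneAdd m * oneAdd m ∈ congruence (m + 2) := by
  refine mem_congruence_of_eq (by omega) (a := 1 + 2 ^ m) ?_
  rw [Units.val_mul, coe_oneAdd]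
  push_cast
  ring

/-- The exponent `n` such that the `k`-th open subgroup of type `b` meets `1 + 4 ℤ_2` in
`1 + 2 ^ n ℤ_2`. -/
def level : Bool → ℕ → ℕ
  | false, k => k + 2
  | true, k => k / 2 + 2 + k % 2

/-- A representative of the nontrivial coset of `congruence (level b k)` in the `k`-th open
subgroup of type `b` if there is one, and `1` otherwise. -/
noncomputable def twist : Bool → ℕ → ℚ_[2]ˣ
  | false, _ => 1
  | true, k => if k % 2 = 0 then -1 else -oneAdd (k / 2 + 1)

theorem two_le_level (b : Bool) (k : ℕ) : 2 ≤ level b k := by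
  cases b <;> simp only [level] <;> omega

theorem twist_mul_self_mem (b : Bool) (k : ℕ) : twist b k * twist b k ∈ congruence (level b k) := by
  cases b
  · simp [twist]
  · simp only [twist]
    split_ifs with h
    · simp
    · rw [neg_mul_neg]
      convert oneAdd_mul_self_mem (k / 2 + 1) using 2
      simp only [level]
      omega

/-- The open subgroups of the units of `ℤ_2`; those of type `false` accumulate at the trivial
group, those of type `true` at `{1, -1}`. -/
noncomputable def thick (b : Bool) (k : ℕ) : Subgroup ℚ_[2]ˣ :=
  doubled (congruence (level b k)) (twist b k) (twist_mul_self_mem b k)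

theorem mem_thick {b : Bool} {k : ℕ} {x : ℚ_[2]ˣ} : x ∈ thick b k ↔
    x ∈ congruence (level b k) ∨ twist b k * x ∈ congruence (level b k) := Iff.rfl

theorem congruence_le_thick (b : Bool) (k : ℕ) : congruence (level b k) ≤ thick b k :=
  fun _ h => Or.inl h

theorem twist_mem_thick (b : Bool) (k : ℕ) : twist b k ∈ thick b k :=
  Or.inr (twist_mul_self_mem b k)

theorem norm_twist (b : Bool) (k : ℕ) : ‖(twist b k : ℚ_[2])‖ = 1 := by
  have h := (twist_mul_self_mem b k).1
  rw [Units.val_mul, norm_mul] at h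
  nlinarith [norm_nonneg (twist b k : ℚ_[2])]

theorem norm_of_mem_thick {b : Bool} {k : ℕ} {x : ℚ_[2]ˣ} (hx : x ∈ thick b k) :
    ‖(x : ℚ_[2])‖ = 1 := by
  rcases hx with h | h
  · exact h.1
  · simpa [norm_twist] using h.1

theorem isOpen_thick (b : Bool) (k : ℕ) : IsOpen (thick b k : Set ℚ_[2]ˣ) :=
  Subgroup.isOpen_mono (congruence_le_thick b k) (isOpen_congruence _)

theorem isClosed_thick (b : Bool) (k : ℕ) : IsClosed (thick b k : Set ℚ_[2]ˣ) :=
  Subgroup.isClosed_of_isOpen _ (isOpen_thick b k)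

theorem index_thick (b : Bool) (k : ℕ) : (thick b k).index = 0 := by
  by_contra h
  obtain ⟨n, hn, -, hmem⟩ := Subgroup.exists_pow_mem_of_index_ne_zero h
    (Units.mk0 (2 : ℚ_[2]) two_ne_zero)
  have := norm_of_mem_thick hmem
  rw [Units.val_pow_eq_pow_val, Units.val_mk0, norm_pow, norm_two_rat] at this
  exact (pow_lt_one₀ (by norm_num) (by norm_num) hn.ne').ne this

theorem not_isOpen_thin {b : Bool} {g : ℚ_[2]} (hg : ‖g‖ < 1) :
    ¬ IsOpen (thin b g : Set ℚ_[2]ˣ) := by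
  intro h
  obtain ⟨N, hN⟩ := exists_congruence_subset (h.mem_nhds (one_mem (thin b g)))
  have h1 : oneAdd (N + 2) ∈ congruence (N + 2) := oneAdd_mem_congruence.2 (by omega)
  have h2 := hN (N + 2) (by omega) _ h1
  rw [one_mul] at h2
  rcases mem_signs_of_mem_thin hg h2 h1.1 with h3 | ⟨-, h3⟩
  · have : oneAdd (N + 2) ∈ congruence (N + 4) := h3 ▸ one_mem _
    rw [oneAdd_mem_congruence] at this
    omega
  · exact neg_one_notMem_congruence (by omega) (h3 ▸ h1)

theorem isClosed_thin {b : Bool} {g : ℚ_[2]} (hg : ‖g‖ < 1) :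
    IsClosed (thin b g : Set ℚ_[2]ˣ) := by
  have : DiscreteTopology (thin b g) := by
    apply discreteTopology_of_isOpen_singleton_one
    convert (isOpen_congruence 2).preimage (continuous_subtype_val (p := (· ∈ thin b g))) using 1
    ext ⟨x, hx⟩
    simp only [Set.mem_singleton_iff, Set.mem_preimage, SetLike.mem_coe]
    constructor
    · intro h
      rw [show x = 1 from congrArg Subtype.val h]
      exact one_mem _
    · intro h
      rcases mem_signs_of_mem_thin hg hx h.1 with h3 | ⟨-, h3⟩
      · exact Subtype.ext h3
      · exact absurd (h3 ▸ h) (neg_one_notMem_congruence le_rfl)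
  exact Subgroup.isClosed_of_discrete

/-! ### Classification -/

theorem exists_eq_thin {H : Subgroup ℚ_[2]ˣ}
    (hH : ∀ x ∈ H, ‖(x : ℚ_[2])‖ = 1 → x = 1 ∨ x = -1) :
    ∃ b, ∃ g : ℚ_[2], ‖g‖ < 1 ∧ H = thin b g := by
  obtain ⟨b, hb⟩ : ∃ b, ∀ x, x ∈ signs b ↔ x ∈ H ∧ ‖(x : ℚ_[2])‖ = 1 := by
    by_cases h1 : (-1 : ℚ_[2]ˣ) ∈ H
    · refine ⟨true, fun x => ⟨?_, fun hx => ?_⟩⟩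
      · rintro (rfl | ⟨-, rfl⟩)
        · simp [one_mem]
        · simp [h1]
      · simpa [mem_signs] using hH x hx.1 hx.2
    · refine ⟨false, fun x => ⟨?_, fun hx => ?_⟩⟩
      · rintro (rfl | ⟨h, -⟩)
        · simp [one_mem]
        · cases h
      · rcases hH x hx.1 hx.2 with h | rfl
        · exact Or.inl h
        · exact absurd hx.1 h1
  have hbH : signs b ≤ H := fun x hx => ((hb x).1 hx).1
  by_cases hall : ∀ x ∈ H, ‖(x : ℚ_[2])‖ = 1
  · refine ⟨b, 0, by simp, le_antisymm (fun x hx => ?_) (thin_le hbH ?_)⟩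
    · exact signs_le_thin _ _ ((hb x).2 ⟨hx, hall x hx⟩)
    · intro u hu
      exact absurd hu u.ne_zero
  · push Not at hall
    obtain ⟨h0, hh0, hn0⟩ := hall
    have hval : ∀ x : ℚ_[2]ˣ, (x : ℚ_[2]).valuation = 0 → ‖(x : ℚ_[2])‖ = 1 := by
      intro x hx
      rw [Padic.norm_eq_zpow_neg_valuation x.ne_zero, hx]
      simp
    have hex : ∃ m : ℕ, 0 < m ∧ ∃ h ∈ H, (h : ℚ_[2]).valuation = m := by
      rcases lt_trichotomy (h0 : ℚ_[2]).valuation 0 with h | h | h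
      · refine ⟨(-(h0 : ℚ_[2]).valuation).toNat, by omega, h0⁻¹, inv_mem hh0, ?_⟩
        rw [Units.val_inv_eq_inv_val, Padic.valuation_inv]
        omega
      · exact absurd (hval _ h) hn0
      · exact ⟨(h0 : ℚ_[2]).valuation.toNat, by omega, h0, hh0, by omega⟩
    classical
    obtain ⟨hm, g, hg, hgm⟩ := Nat.find_spec hex
    have hmin := fun m => Nat.find_min hex (m := m)
    set m := Nat.find hex
    refine ⟨b, g, ?_, le_antisymm (fun x hx => ?_) (thin_le hbH ?_)⟩
    · rw [Padic.norm_eq_zpow_neg_valuation g.ne_zero, hgm]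
      exact zpow_lt_one_of_neg₀ (by norm_num) (by omega)
    · set k := (x : ℚ_[2]).valuation / m with hk
      set y := x * g ^ (-k) with hy
      have hyH : y ∈ H := mul_mem hx (zpow_mem hg _)
      have hyv : (y : ℚ_[2]).valuation = (x : ℚ_[2]).valuation % m := by
        rw [hy, Units.val_mul, Padic.valuation_mul x.ne_zero (Units.ne_zero _),
          Units.val_zpow_eq_zpow_val, Padic.valuation_zpow, hgm]
        have := Int.emod_add_mul_ediv (x : ℚ_[2]).valuation m
        linarith
      have hr0 := Int.emod_nonneg (x : ℚ_[2]).valuation (b := m) (by omega)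
      have hr1 := Int.emod_lt_of_pos (x : ℚ_[2]).valuation (b := m) (by omega)
      have hy0 : (y : ℚ_[2]).valuation = 0 := by
        by_contra hne
        exact hmin ((y : ℚ_[2]).valuation.toNat) (by omega) ⟨by omega, y, hyH, by omega⟩
      have hys := (hb y).2 ⟨hyH, hval y hy0⟩
      refine ⟨k, y, hys, ?_⟩
      have : x = y * g ^ k := by rw [hy]; group
      conv_lhs => rw [this]
      simp
    · intro u hu
      rwa [Units.ext hu]

theorem exists_eq_thick {H : Subgroup ℚ_[2]ˣ} (hH : IsClosed (H : Set ℚ_[2]ˣ))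
    (h1 : ∀ x ∈ H, ‖(x : ℚ_[2])‖ = 1) (hV : ∃ n ≥ 2, congruence n ≤ H) :
    ∃ b k, H = thick b k := by
  classical
  obtain ⟨hn2, hnH⟩ := Nat.find_spec hV
  have hmin : ∀ m ≥ 2, congruence m ≤ H → Nat.find hV ≤ m := fun m h2 hm =>
    Nat.find_min' hV ⟨h2, hm⟩
  set n := Nat.find hV
  have hH2 : ∀ x ∈ H, x ∈ congruence 2 → x ∈ congruence n := by
    intro x hx hx2
    by_cases hx1 : x = 1
    · exact hx1 ▸ one_mem _
    · obtain ⟨m, hm, a, ha⟩ := exists_eq_of_mem_congruence hx2 hx1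
      refine congruence_anti (hmin m hm (congruence_le_of_mem hH hm hx ha)) ?_
      exact mem_congruence_of_eq (by omega) (a := 1 + 2 * a) (by rw [ha]; push_cast; rfl)
  have hH2' : ∀ x ∈ H, x ∉ congruence n → -x ∈ congruence 2 := fun x hx hxn =>
    (mem_congruence_two_or_neg (h1 x hx)).resolve_left fun h => hxn (hH2 x hx h)
  by_cases hall : ∀ x ∈ H, x ∈ congruence n
  · refine ⟨false, n - 2, ?_⟩
    have hl : level false (n - 2) = n := by simp only [level]; omega
    ext x
    rw [mem_thick, hl]
    simpa [twist] using ⟨hall x, fun h => hnH h⟩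
  by_cases hneg : (-1 : ℚ_[2]ˣ) ∈ H
  · refine ⟨true, 2 * (n - 2), ?_⟩
    have hl : level true (2 * (n - 2)) = n := by simp only [level]; omega
    have ht : twist true (2 * (n - 2)) = -1 := by simp [twist]
    have hnegH : ∀ x, -x ∈ H ↔ x ∈ H := by
      intro x
      rw [← neg_one_mul]
      exact H.mul_mem_cancel_left hneg
    ext x
    rw [mem_thick, hl, ht, neg_one_mul]
    constructor
    · intro hx
      by_cases hxn : x ∈ congruence n
      · exact Or.inl hxn
      · exact Or.inr (hH2 _ ((hnegH x).2 hx) (hH2' x hx hxn))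
    · rintro (h | h)
      · exact hnH h
      · exact (hnegH x).1 (hnH h)
  · have key : ∀ x ∈ H, x ∉ congruence n → 3 ≤ n ∧ -oneAdd (n - 2) * x ∈ congruence n := by
      intro x hx hxn
      have hx1 : -x ≠ 1 := by
        rintro h
        rw [← h] at hneg
        simp [hx] at hneg
      obtain ⟨m, hm, a, ha⟩ := exists_eq_of_mem_congruence (hH2' x hx hxn) hx1
      obtain ⟨c, hc⟩ := exists_pow_two_pow hm ha 1
      have hle : n ≤ m + 1 := hmin _ (by omega) (congruence_le_of_mem hH (by omega)
        (g := x ^ 2) (pow_mem hx 2) (a := c) (by simpa using hc))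
      have hlt : ¬ n ≤ m := by
        intro hnm
        have h2 : -x ∈ congruence n := congruence_anti hnm
          (mem_congruence_of_eq (by omega) (a := 1 + 2 * a) (by rw [ha]; push_cast; rfl))
        have := mul_mem (hnH h2) (inv_mem hx)
        simp at this
        exact hneg this
      refine ⟨by omega, ?_⟩
      obtain ⟨l, rfl⟩ := Nat.exists_eq_add_of_le' (show 1 ≤ m by omega)
      rw [show n = l + 1 + 1 by omega, neg_mul_comm]
      refine mem_congruence_succ_mul (by omega) (a := 0) ?_ ha
      rw [show l + 1 + 1 - 2 = l by omega, coe_oneAdd]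
      simp
    push Not at hall
    obtain ⟨y, hy, hyn⟩ := hall
    obtain ⟨hn3, hyc⟩ := key y hy hyn
    refine ⟨true, 2 * (n - 3) + 1, ?_⟩
    have hl : level true (2 * (n - 3) + 1) = n := by simp only [level]; omega
    have ht : twist true (2 * (n - 3) + 1) = -oneAdd (n - 2) := by
      simp only [twist]
      rw [if_neg (by omega)]
      congr 2
      omega
    ext x
    rw [mem_thick, hl, ht]
    constructor
    · intro hx
      by_cases hxn : x ∈ congruence n
      · exact Or.inl hxn
      · exact Or.inr (key x hx hxn).2
    · rintro (h | h)
      · exact hnH h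
      · have h2 := hnH (mul_mem h (inv_mem hyc))
        rw [mul_inv, mul_mul_mul_comm, mul_inv_cancel, one_mul] at h2
        have := mul_mem h2 hy
        rwa [inv_mul_cancel_right] at this

theorem eq_thin_or_eq_thick {H : Subgroup ℚ_[2]ˣ} (hH : IsClosed (H : Set ℚ_[2]ˣ))
    (hN : ¬ (IsOpen (H : Set ℚ_[2]ˣ) ∧ H.index ≠ 0)) :
    (∃ b, ∃ g : ℚ_[2], ‖g‖ < 1 ∧ H = thin b g) ∨ ∃ b k, H = thick b k := by
  by_cases h : ∀ x ∈ H, ‖(x : ℚ_[2])‖ = 1 → x = 1 ∨ x = -1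
  · exact Or.inl (exists_eq_thin h)
  · right
    push Not at h
    obtain ⟨u, hu, hu1, hu2, hu3⟩ := h
    obtain ⟨n, hn, hle⟩ := congruence_le_of_unit_mem hH hu hu1 hu2 hu3
    refine exists_eq_thick hH (fun x hx => ?_) ⟨n, hn, hle⟩
    by_contra hx1
    exact hN ⟨Subgroup.isOpen_mono hle (isOpen_congruence n),
      finite_index_of_congruence_le (by omega) hle hx hx1⟩


/-! ### The Chabauty topology -/

instance {G : Type*} [Group G] [TopologicalSpace G] [LocallyCompactSpace G] :
    T2Space (ChabautySpace G) := by
  have key : ∀ H₁ H₂ : ChabautySpace G, ∀ x ∈ H₁.1, x ∉ H₂.1 →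
      ∃ U V : Set (ChabautySpace G), IsOpen U ∧ IsOpen V ∧ H₁ ∈ U ∧ H₂ ∈ V ∧ Disjoint U V := by
    intro H₁ H₂ x hx1 hx2
    obtain ⟨K, hKx, hKsub, hK⟩ := local_compact_nhds (H₂.2.isOpen_compl.mem_nhds hx2)
    refine ⟨{H | ((H.1 : Set G) ∩ interior K).Nonempty}, {H | (H.1 : Set G) ∩ K = ∅},
      TopologicalSpace.isOpen_generateFrom_of_mem (Or.inr ⟨_, isOpen_interior, rfl⟩),
      TopologicalSpace.isOpen_generateFrom_of_mem (Or.inl ⟨_, hK, rfl⟩),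
      ⟨x, hx1, mem_interior_iff_mem_nhds.2 hKx⟩, ?_, ?_⟩
    · ext y
      simpa using fun hy hyK => hKsub hyK hy
    · rw [Set.disjoint_left]
      rintro H ⟨y, hy, hyK⟩ h
      have : y ∈ (H.1 : Set G) ∩ K := ⟨hy, interior_subset hyK⟩
      rw [h] at this
      exact this
  refine ⟨fun H₁ H₂ hne => ?_⟩
  have h1 : ∃ x, ¬ (x ∈ H₁.1 ↔ x ∈ H₂.1) := by
    by_contra! h
    exact hne (Subtype.ext (Subgroup.ext h))
  obtain ⟨x, hx⟩ := h1
  by_cases hx1 : x ∈ H₁.1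
  · exact key H₁ H₂ x hx1 fun h => hx (iff_of_true hx1 h)
  · have hx2 : x ∈ H₂.1 := by
      by_contra h
      exact hx (iff_of_false hx1 h)
    obtain ⟨U, V, hU, hV, h2, h1, hd⟩ := key H₂ H₁ x hx2 hx1
    exact ⟨V, U, hV, hU, h1, h2, hd.symm⟩

theorem tendsto_chabautySpace {G Y : Type*} [Group G] [TopologicalSpace G] {l : Filter Y}
    {F : Y → ChabautySpace G} {H : ChabautySpace G}
    (hK : ∀ K : Set G, IsCompact K → (∀ x ∈ H.1, x ∉ K) → ∀ᶠ y in l, ∀ x ∈ (F y).1, x ∉ K)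
    (hU : ∀ U : Set G, IsOpen U → ∀ x ∈ H.1, x ∈ U → ∀ᶠ y in l, ∃ x ∈ (F y).1, x ∈ U) :
    Tendsto F l (𝓝 H) := by
  rw [TopologicalSpace.tendsto_nhds_generateFrom_iff]
  rintro S (⟨K, hKc, rfl⟩ | ⟨U, hUo, rfl⟩) hHS
  · have h : ∀ x ∈ H.1, x ∉ K := fun x hx hxK => by
      have : x ∈ (H.1 : Set G) ∩ K := ⟨hx, hxK⟩
      rw [hHS] at this
      exact this
    filter_upwards [hK K hKc h] with y hy
    ext x
    simpa using hy x
  · obtain ⟨x, hx, hxU⟩ := hHS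
    exact hU U hUo x hx hxU

theorem finite_signs (b : Bool) : (signs b : Set ℚ_[2]ˣ).Finite := by
  refine (Set.toFinite {1, -1}).subset ?_
  rintro x (rfl | ⟨-, rfl⟩) <;> simp

/-- `thin b g` as a point of the Chabauty space. -/
def thinPoint (b : Bool) (g : Metric.closedBall (0 : ℚ_[2]) (1 / 2)) : ChabautySpace ℚ_[2]ˣ :=
  ⟨thin b g, isClosed_thin (by
    have := mem_closedBall_zero_iff.1 g.2
    linarith)⟩

theorem continuous_thinPoint (b : Bool) : Continuous (thinPoint b) := by
  rw [continuous_iff_continuousAt]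
  intro g
  apply tendsto_chabautySpace
  · intro K hK hdisj
    change ∀ x ∈ thin b g, x ∉ K at hdisj
    have hdisj' : ∀ x ∈ thin b g, x ∉ K ∪ K⁻¹ := by
      rintro x hx (h | h)
      · exact hdisj x hx h
      · exact hdisj _ (inv_mem hx) h
    have hK' : IsCompact (K ∪ K⁻¹) := hK.union hK.inv
    obtain ⟨r, hr0, hr⟩ := hK'.exists_forall_le' (f := fun u : ℚ_[2]ˣ => ‖(u : ℚ_[2])‖) (a := 0)
      Units.continuous_val.norm.continuousOn (fun u _ => norm_pos_iff.2 u.ne_zero)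
    obtain ⟨A, hA⟩ := exists_pow_lt_of_lt_one hr0 (show (1 / 2 : ℝ) < 1 by norm_num)
    have hev : ∀ᶠ g' : Metric.closedBall (0 : ℚ_[2]) (1 / 2) in 𝓝 g,
        ∀ n ∈ Finset.range A, ∀ l ∈ (signs b : Set ℚ_[2]ˣ), ∀ x ∈ K ∪ K⁻¹,
          (x : ℚ_[2]) ≠ l * (g' : ℚ_[2]) ^ n := by
      rw [eventually_all_finset]
      intro n _
      rw [eventually_all_finite (finite_signs b)]
      intro l hl
      have hcl : IsClosed ((fun u : ℚ_[2]ˣ => (u : ℚ_[2])) '' (K ∪ K⁻¹)) :=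
        (hK'.image Units.continuous_val).isClosed
      have hcont : Continuous fun g' : Metric.closedBall (0 : ℚ_[2]) (1 / 2) =>
          (l : ℚ_[2]) * (g' : ℚ_[2]) ^ n := by fun_prop
      have hmem : (l : ℚ_[2]) * (g : ℚ_[2]) ^ n ∈
          ((fun u : ℚ_[2]ˣ => (u : ℚ_[2])) '' (K ∪ K⁻¹))ᶜ := by
        rintro ⟨x, hx, hxe⟩
        exact hdisj' x ⟨n, l, hl, by simpa using hxe⟩ hx
      filter_upwards [hcont.continuousAt.preimage_mem_nhds (hcl.isOpen_compl.mem_nhds hmem)]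
        with g' hg' x hx hxe
      exact hg' ⟨x, hx, hxe⟩
    filter_upwards [hev] with g' hg'
    have key : ∀ (n : ℕ), ∀ l ∈ signs b, ∀ x ∈ K ∪ K⁻¹, (x : ℚ_[2]) ≠ l * (g' : ℚ_[2]) ^ n := by
      intro n l hl x hx hxe
      by_cases hn : n < A
      · exact hg' n (Finset.mem_range.2 hn) l hl x hx hxe
      · have h1 : ‖(x : ℚ_[2])‖ ≤ (1 / 2) ^ A := by
          rw [hxe, norm_mul, norm_of_mem_signs hl, one_mul, norm_pow]
          calc ‖(g' : ℚ_[2])‖ ^ n ≤ (1 / 2) ^ n :=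
                pow_le_pow_left₀ (norm_nonneg _) (mem_closedBall_zero_iff.1 g'.2) n
            _ ≤ (1 / 2) ^ A := pow_le_pow_of_le_one (by norm_num) (by norm_num) (by omega)
        linarith [hr x hx]
    rintro x ⟨k, l, hl, hxe⟩ hxK
    obtain ⟨n, rfl | rfl⟩ := Int.eq_nat_or_neg k
    · exact key n l hl x (Or.inl hxK) (by simpa using hxe)
    · refine key n l⁻¹ (inv_mem hl) x⁻¹ (Or.inr (by simpa using hxK)) ?_
      rw [Units.val_inv_eq_inv_val, hxe]
      simp [mul_comm]
  · rintro U hU x ⟨k, l, hl, hxe⟩ hxU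
    obtain ⟨O, hO, rfl⟩ := Units.isEmbedding_val₀.isOpen_iff.1 hU
    have hcond : (g : ℚ_[2]) ≠ 0 ∨ 0 ≤ k := by
      by_cases hg : (g : ℚ_[2]) = 0
      · rw [hg] at hxe
        exact Or.inr (zpow_exponent_eq_zero hxe).ge
      · exact Or.inl hg
    have hcont : ContinuousAt (fun g' : Metric.closedBall (0 : ℚ_[2]) (1 / 2) =>
        (l : ℚ_[2]) * (g' : ℚ_[2]) ^ k) g :=
      continuousAt_const.mul (continuous_subtype_val.continuousAt.zpow₀ k hcond)
    have hmem : (l : ℚ_[2]) * (g : ℚ_[2]) ^ k ∈ O ∩ {0}ᶜ := by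
      rw [← hxe]
      exact ⟨hxU, x.ne_zero⟩
    filter_upwards [hcont.preimage_mem_nhds
      ((hO.inter isClosed_singleton.isOpen_compl).mem_nhds hmem)] with g' hg'
    exact ⟨Units.mk0 _ hg'.2, ⟨k, l, hl, rfl⟩, hg'.1⟩

/-- `thick b k` as a point of the Chabauty space. -/
noncomputable def thickPoint (b : Bool) (k : ℕ) : ChabautySpace ℚ_[2]ˣ :=
  ⟨thick b k, isClosed_thick b k⟩

theorem neg_twist_mem (k : ℕ) : -twist true k ∈ congruence (level true k - 1) := by
  simp only [twist]
  split_ifs with h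
  · simp
  · rw [neg_neg, oneAdd_mem_congruence]
    simp only [level]
    omega

theorem exists_inv_mul_mem_of_mem_thick {b : Bool} {k : ℕ} {x : ℚ_[2]ˣ} (hx : x ∈ thick b k) :
    ∃ l ∈ signs b, l⁻¹ * x ∈ congruence (level b k - 1) := by
  have hanti : congruence (level b k) ≤ congruence (level b k - 1) :=
    congruence_anti (Nat.sub_le _ _)
  rcases hx with hx | hx
  · exact ⟨1, one_mem _, by simpa using hanti hx⟩
  · cases b
    · exact ⟨1, one_mem _, by simpa [twist] using hanti hx⟩
    · refine ⟨-1, Or.inr ⟨rfl, rfl⟩, ?_⟩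
      have := mul_mem (inv_mem (neg_twist_mem k)) (hanti hx)
      have he : (-twist true k)⁻¹ * (twist true k * x) = (-1)⁻¹ * x := by
        rw [inv_neg, neg_mul, inv_mul_cancel_left]
        simp
      rwa [he] at this

theorem exists_mem_thick_inv_mul_mem {b : Bool} (k : ℕ) {l : ℚ_[2]ˣ} (hl : l ∈ signs b) :
    ∃ x ∈ thick b k, l⁻¹ * x ∈ congruence (level b k - 1) := by
  rcases hl with rfl | ⟨rfl, rfl⟩
  · exact ⟨1, one_mem _, by simp⟩
  · exact ⟨twist true k, twist_mem_thick _ _, by simpa using neg_twist_mem k⟩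

theorem tendsto_level (b : Bool) : Tendsto (fun k => level b k - 1) atTop atTop := by
  rw [tendsto_atTop]
  intro N
  filter_upwards [eventually_ge_atTop (2 * N)] with k hk
  cases b <;> simp only [level] <;> omega

theorem tendsto_thickPoint (b : Bool) (g : Metric.closedBall (0 : ℚ_[2]) (1 / 2))
    (hg : (g : ℚ_[2]) = 0) : Tendsto (thickPoint b) atTop (𝓝 (thinPoint b g)) := by
  have hev : ∀ (U : Set ℚ_[2]ˣ) (x : ℚ_[2]ˣ), IsOpen U → x ∈ U → ∀ᶠ k in atTop,
      ∀ v ∈ congruence (level b k - 1), x * v ∈ U := by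
    intro U x hU hx
    obtain ⟨N, hN⟩ := exists_congruence_subset (hU.mem_nhds hx)
    filter_upwards [(tendsto_level b).eventually_ge_atTop N] with k hk
    exact hN _ hk
  apply tendsto_chabautySpace
  · intro K hK hdisj
    have h := (eventually_all_finite (finite_signs b)).2 fun l (hl : l ∈ signs b) =>
      hev Kᶜ l hK.isClosed.isOpen_compl (hdisj l (signs_le_thin b _ hl))
    filter_upwards [h] with k hk x hx
    obtain ⟨l, hl, hlx⟩ := exists_inv_mul_mem_of_mem_thick hx
    simpa using hk l hl _ hlx
  · intro U hU x hx hxU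
    have hxs : x ∈ signs b := by
      obtain ⟨k, l, hl, hxe⟩ := hx
      rw [hg] at hxe
      have hk := zpow_exponent_eq_zero hxe
      have : x = l := by
        ext
        simpa [hk] using hxe
      rwa [this]
    filter_upwards [hev U x hU hxU] with k hk
    obtain ⟨y, hy, hyx⟩ := exists_mem_thick_inv_mul_mem k hxs
    exact ⟨y, hy, by simpa using hk _ hyx⟩


/-! ### Separation of the two families -/

theorem neg_one_mem_thin {b : Bool} {g : ℚ_[2]} (hg : ‖g‖ < 1) :
    (-1 : ℚ_[2]ˣ) ∈ thin b g ↔ b = true := by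
  constructor
  · intro h
    rcases mem_signs_of_mem_thin hg h (by simp) with h1 | ⟨hb, -⟩
    · exact absurd (h1 ▸ one_mem (congruence 2)) (neg_one_notMem_congruence le_rfl)
    · exact hb
  · rintro rfl
    exact signs_le_thin _ _ (Or.inr ⟨rfl, rfl⟩)

theorem thin_zero_ne {b b' : Bool} {g : ℚ_[2]} (hg : ‖g‖ < 1) (hg0 : g ≠ 0) :
    thin b g ≠ thin b' 0 := by
  intro h
  have h1 : Units.mk0 g hg0 ∈ thin b' 0 := h ▸ mem_thin_self b (Units.mk0 g hg0)
  obtain ⟨k, l, hl, hx⟩ := h1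
  have hk := zpow_exponent_eq_zero hx
  subst hk
  have := norm_of_mem_signs hl
  simp only [Units.val_mk0, zpow_zero, mul_one] at hx
  rw [← hx] at this
  exact hg.ne this

theorem norm_le_of_thin_eq {b b' : Bool} {g g' : ℚ_[2]} (hg : ‖g‖ < 1) (hg' : ‖g'‖ < 1)
    (hg0 : g ≠ 0) (hg0' : g' ≠ 0) (h : thin b g = thin b' g') :
    ‖g‖ ≤ ‖g'‖ ∧ (‖g‖ = ‖g'‖ → ∃ l ∈ signs b', g = l * g') := by
  have h1 : Units.mk0 g hg0 ∈ thin b' g' := h ▸ mem_thin_self b (Units.mk0 g hg0)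
  obtain ⟨k, l, hl, hx⟩ := h1
  rw [Units.val_mk0] at hx
  have hn : ‖g‖ = ‖g'‖ ^ k := by
    rw [hx, norm_mul, norm_of_mem_signs hl, one_mul, norm_zpow]
  have hpos : 0 < ‖g'‖ := norm_pos_iff.2 hg0'
  constructor
  · by_contra! hlt
    rw [hn] at hlt hg
    nth_rewrite 1 [← zpow_one ‖g'‖] at hlt
    rw [zpow_lt_zpow_iff_right_of_lt_one₀ hpos hg'] at hlt
    rw [← zpow_zero ‖g'‖, zpow_lt_zpow_iff_right_of_lt_one₀ hpos hg'] at hg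
    omega
  · intro he
    have hk : k = 1 := by
      rw [he] at hn
      nth_rewrite 1 [← zpow_one ‖g'‖] at hn
      exact (zpow_right_injective₀ hpos hg'.ne hn).symm
    exact ⟨l, hl, by simpa [hk] using hx⟩

theorem thin_injective {b b' : Bool} {g g' : ℚ_[2]} (hg : ‖g‖ < 1) (hg' : ‖g'‖ < 1)
    (h : thin b g = thin b' g') : b = b' ∧ (g = g' ∨ b = true ∧ g = -g') := by
  have hb : b = b' := by
    rw [Bool.eq_iff_iff, ← neg_one_mem_thin hg, ← neg_one_mem_thin hg', h]
  subst hb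
  refine ⟨rfl, ?_⟩
  by_cases hg0 : g = 0
  · subst hg0
    by_cases hg0' : g' = 0
    · exact Or.inl hg0'.symm
    · exact absurd h.symm (thin_zero_ne hg' hg0')
  · by_cases hg0' : g' = 0
    · subst hg0'
      exact absurd h (thin_zero_ne hg hg0)
    · obtain ⟨h1, h2⟩ := norm_le_of_thin_eq hg hg' hg0 hg0' h
      obtain ⟨h3, -⟩ := norm_le_of_thin_eq hg' hg hg0' hg0 h.symm
      obtain ⟨l, rfl | ⟨hb, rfl⟩, hl⟩ := h2 (le_antisymm h1 h3)
      · exact Or.inl (by simpa using hl)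
      · exact Or.inr ⟨hb, by simpa using hl⟩

theorem thin_neg_le (g : ℚ_[2]) : thin true (-g) ≤ thin true g := by
  refine thin_le (signs_le_thin _ _) fun u hu => ⟨1, -1, Or.inr ⟨rfl, rfl⟩, ?_⟩
  simpa using hu

theorem thin_neg (g : ℚ_[2]) : thin true (-g) = thin true g :=
  le_antisymm (thin_neg_le g) (by simpa using thin_neg_le (-g))

theorem neg_twist_mem_congruence_two (k : ℕ) : -twist true k ∈ congruence 2 := by
  simp only [twist]
  split_ifs with h
  · simp
  · rw [neg_neg, oneAdd_mem_congruence]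
    omega

theorem mem_thick_iff_of_mem_congruence_two {b : Bool} {k : ℕ} {x : ℚ_[2]ˣ}
    (hx : x ∈ congruence 2) : x ∈ thick b k ↔ x ∈ congruence (level b k) := by
  refine ⟨?_, Or.inl⟩
  rintro (h | h)
  · exact h
  · cases b
    · simpa [twist] using h
    · exfalso
      have h1 := mul_mem (congruence_anti (two_le_level _ _) h) (inv_mem hx)
      rw [mul_inv_cancel_right] at h1
      exact neg_notMem_congruence le_rfl h1 (neg_twist_mem_congruence_two k)

theorem level_le_of_thick_eq {b b' : Bool} {k k' : ℕ} (h : thick b k = thick b' k') :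
    level b k ≤ level b' k' := by
  have h2 := two_le_level b' k'
  have h1 : oneAdd (level b' k' - 1) ∈ congruence (level b' k') :=
    oneAdd_mem_congruence.2 (by omega)
  have h3 : oneAdd (level b' k' - 1) ∈ thick b k := h ▸ congruence_le_thick _ _ h1
  rw [mem_thick_iff_of_mem_congruence_two (congruence_anti h2 h1), oneAdd_mem_congruence] at h3
  omega

theorem neg_one_mem_thick_true {k : ℕ} : (-1 : ℚ_[2]ˣ) ∈ thick true k ↔ k % 2 = 0 := by
  constructor
  · rintro (h | h)
    · exact absurd h (neg_one_notMem_congruence (two_le_level _ _))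
    · by_contra hk
      simp only [twist, if_neg hk, mul_neg, mul_one, neg_neg, oneAdd_mem_congruence, level] at h
      omega
  · intro hk
    simpa [twist, hk] using twist_mem_thick true k

theorem thick_false_ne_true (k k' : ℕ) : thick false k ≠ thick true k' := by
  intro h
  have h1 : twist true k' ∈ thick false k := h ▸ twist_mem_thick true k'
  have h2 : twist true k' ∈ congruence 2 := by
    rcases h1 with h1 | h1
    · exact congruence_anti (two_le_level _ _) h1
    · exact congruence_anti (two_le_level _ _) (by simpa [twist] using h1)
  exact neg_notMem_congruence le_rfl h2 (neg_twist_mem_congruence_two k')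

theorem thick_injective {b b' : Bool} {k k' : ℕ} (h : thick b k = thick b' k') :
    b = b' ∧ k = k' := by
  have hl := le_antisymm (level_le_of_thick_eq h) (level_le_of_thick_eq h.symm)
  cases b <;> cases b'
  · exact ⟨rfl, by simpa [level] using hl⟩
  · exact absurd h (thick_false_ne_true _ _)
  · exact absurd h.symm (thick_false_ne_true _ _)
  · have hk : k % 2 = 0 ↔ k' % 2 = 0 := by
      rw [← neg_one_mem_thick_true, ← neg_one_mem_thick_true, h]
    simp only [level] at hl
    exact ⟨rfl, by omega⟩

/-! ### Parametrization of the generators -/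

open Classical in
/-- The power of `2` with the same norm as `z`. -/
noncomputable def twoPart (z : ℤ_[2]) : ℤ_[2] := if z = 0 then 0 else 2 ^ z.valuation

theorem norm_twoPart (z : ℤ_[2]) : ‖twoPart z‖ = ‖z‖ := by
  by_cases hz : z = 0
  · simp [twoPart, hz]
  · rw [twoPart, if_neg hz, PadicInt.norm_eq_zpow_neg_valuation hz, norm_pow, norm_two, zpow_neg]
    simp

theorem continuous_twoPart : Continuous twoPart := by
  rw [continuous_iff_continuousAt]
  intro z
  by_cases hz : z = 0
  · subst hz
    have h0 : twoPart 0 = 0 := if_pos rfl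
    rw [ContinuousAt, h0]
    refine squeeze_zero_norm (fun z => (norm_twoPart z).le) ?_
    simpa using (continuous_norm (E := ℤ_[2])).tendsto 0
  · refine continuousAt_const.congr (f := fun _ => twoPart z) ?_
    filter_upwards [Metric.ball_mem_nhds z (norm_pos_iff.2 hz)] with y hy
    rw [Metric.mem_ball, dist_eq_norm, sub_eq_add_neg, ← norm_neg z] at hy
    have hn := PadicInt.norm_eq_of_norm_add_lt_right hy
    rw [norm_neg] at hn
    have hy0 : y ≠ 0 := by
      rintro rfl
      rw [norm_zero, eq_comm, norm_eq_zero] at hn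
      exact hz hn
    rw [PadicInt.norm_eq_zpow_neg_valuation hy0, PadicInt.norm_eq_zpow_neg_valuation hz] at hn
    have := zpow_right_injective₀ (by norm_num) (by norm_num) hn
    rw [twoPart, twoPart, if_neg hz, if_neg hy0]
    congr 1
    omega

/-- A parametrization of `ℤ_2` if `b = false`, and of a set of representatives of `ℤ_2` modulo
sign if `b = true`. -/
noncomputable def spread (b : Bool) (z : ℤ_[2]) : ℤ_[2] :=
  bif b then 2 * z - twoPart z else z

theorem continuous_spread (b : Bool) : Continuous (spread b) := by
  cases b
  · exact continuous_id
  · exact (continuous_const.mul continuous_id).sub continuous_twoPart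

theorem spread_zero (b : Bool) : spread b 0 = 0 := by
  cases b <;> simp [spread, twoPart]

theorem pow_mul_ne_zero (n : ℕ) (a : ℤ_[2]) : 2 ^ n * (1 + 2 * a) ≠ 0 :=
  mul_ne_zero (pow_ne_zero _ two_ne_zero) (one_add_two_mul_ne_zero a)

theorem spread_true_pow_mul (n : ℕ) (a : ℤ_[2]) :
    spread true (2 ^ n * (1 + 2 * a)) = 2 ^ n * (1 + 2 * (2 * a)) := by
  simp only [spread, cond_true, twoPart, if_neg (pow_mul_ne_zero n a), valuation_pow_mul]
  ring

theorem spread_injective {b : Bool} {z z' : ℤ_[2]}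
    (h : spread b z = spread b z' ∨ b = true ∧ spread b z = -spread b z') : z = z' := by
  cases b
  · simpa [spread] using h
  by_cases hz : z = 0
  · subst hz
    by_contra hz'
    obtain ⟨a, ha⟩ := exists_eq_pow_mul (Ne.symm hz')
    rw [ha, spread_zero, spread_true_pow_mul] at h
    have := pow_mul_ne_zero z'.valuation (2 * a)
    rcases h with h | ⟨-, h⟩
    · exact this h.symm
    · exact this (by linear_combination h)
  by_cases hz' : z' = 0
  · subst hz'
    obtain ⟨a, ha⟩ := exists_eq_pow_mul hz
    rw [ha, spread_zero, spread_true_pow_mul] at h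
    have := pow_mul_ne_zero z.valuation (2 * a)
    rcases h with h | ⟨-, h⟩
    · exact absurd h this
    · exact absurd (by simpa using h) this
  obtain ⟨a, ha⟩ := exists_eq_pow_mul hz
  obtain ⟨c, hc⟩ := exists_eq_pow_mul hz'
  generalize z.valuation = n at ha
  generalize z'.valuation = m at hc
  subst ha hc
  rw [spread_true_pow_mul, spread_true_pow_mul] at h
  have h2 : (2 : ℤ_[2]) ^ n ≠ 0 := pow_ne_zero _ two_ne_zero
  rcases h with h | ⟨-, h⟩
  · have hnm := congrArg PadicInt.valuation h
    rw [valuation_pow_mul, valuation_pow_mul] at hnm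
    subst hnm
    have := mul_left_cancel₀ h2 h
    have h3 : (2 : ℤ_[2]) * (2 * a) = 2 * (2 * c) := by linear_combination this
    rw [mul_left_cancel₀ two_ne_zero (mul_left_cancel₀ two_ne_zero h3)]
  · rw [show -((2 : ℤ_[2]) ^ m * (1 + 2 * (2 * c))) = 2 ^ m * (1 + 2 * (-1 - 2 * c)) by ring] at h
    have hnm := congrArg PadicInt.valuation h
    rw [valuation_pow_mul, valuation_pow_mul] at hnm
    subst hnm
    have := mul_left_cancel₀ h2 h
    have h3 : (2 : ℤ_[2]) * (2 * a) = 2 * (-1 - 2 * c) := by linear_combination this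
    have h4 := mul_left_cancel₀ two_ne_zero h3
    exact absurd (by linear_combination h4) (one_add_two_mul_ne 0 (-a - c))

theorem exists_spread_eq (b : Bool) (y : ℤ_[2]) :
    ∃ z, spread b z = y ∨ b = true ∧ spread b z = -y := by
  cases b
  · exact ⟨y, Or.inl rfl⟩
  by_cases hy : y = 0
  · exact ⟨0, Or.inl (by rw [spread_zero, hy])⟩
  obtain ⟨a, ha⟩ := exists_eq_pow_mul hy
  obtain ⟨c, rfl | rfl⟩ := even_or_odd a
  · refine ⟨2 ^ y.valuation * (1 + 2 * c), Or.inl ?_⟩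
    rw [spread_true_pow_mul, ← ha]
  · refine ⟨2 ^ y.valuation * (1 + 2 * (-1 - c)), Or.inr ⟨rfl, ?_⟩⟩
    rw [spread_true_pow_mul]
    conv_rhs => rw [ha]
    ring

/-- The generator of type `b` with parameter `z`. -/
noncomputable def generator (b : Bool) (z : ℤ_[2]) : Metric.closedBall (0 : ℚ_[2]) (1 / 2) :=
  ⟨((2 * spread b z : ℤ_[2]) : ℚ_[2]), by
    rw [mem_closedBall_zero_iff, PadicInt.padic_norm_e_of_padicInt, norm_mul, norm_two]
    exact mul_le_of_le_one_right (by norm_num) (PadicInt.norm_le_one _)⟩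

theorem continuous_generator (b : Bool) : Continuous (generator b) :=
  Continuous.subtype_mk
    (PadicInt.isOpenEmbedding_coe.continuous.comp
      (show Continuous fun z => (2 * spread b z : ℤ_[2]) from
        continuous_const.mul (continuous_spread b))) _

theorem generator_zero (b : Bool) : (generator b 0 : ℚ_[2]) = 0 := by
  simp [generator, spread_zero]

theorem norm_generator_lt (b : Bool) (z : ℤ_[2]) : ‖(generator b z : ℚ_[2])‖ < 1 := by
  have := mem_closedBall_zero_iff.1 (generator b z).2
  linarith

theorem thin_generator_injective {b b' : Bool} {z z' : ℤ_[2]}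
    (h : thin b (generator b z) = thin b' (generator b' z')) : b = b' ∧ z = z' := by
  obtain ⟨rfl, hg⟩ := thin_injective (norm_generator_lt _ _) (norm_generator_lt _ _) h
  refine ⟨rfl, spread_injective (b := b) ?_⟩
  have h2 : ∀ x y : ℤ_[2], ((2 * x : ℤ_[2]) : ℚ_[2]) = ((2 * y : ℤ_[2]) : ℚ_[2]) → x = y :=
    fun x y hxy => mul_left_cancel₀ two_ne_zero (eq_of_coe hxy)
  rcases hg with hg | ⟨hb, hg⟩
  · exact Or.inl (h2 _ _ hg)
  · refine Or.inr ⟨hb, h2 _ _ (hg.trans ?_)⟩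
    simp [generator]

theorem exists_thin_generator_eq (b : Bool) {g : ℚ_[2]} (hg : ‖g‖ < 1) :
    ∃ z, thin b (generator b z) = thin b g := by
  obtain ⟨x, rfl⟩ := exists_coe_eq hg.le
  obtain ⟨y, rfl | rfl⟩ := even_or_odd x
  · obtain ⟨z, hz | ⟨rfl, hz⟩⟩ := exists_spread_eq b y
    · exact ⟨z, by simp only [generator, hz]⟩
    · refine ⟨z, ?_⟩
      rw [← thin_neg]
      simp [generator, hz]
  · rw [PadicInt.padic_norm_e_of_padicInt, norm_one_add_two_mul] at hg
    exact absurd hg (lt_irrefl 1)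

/-! ### The Cantor space -/

/-- The dyadic integer with given binary digits. -/
noncomputable def ofBits (u : ℕ → Bool) : ℤ_[2] := ∑' i, (bif u i then 1 else 0) * 2 ^ i

theorem norm_bit_le (b : Bool) (i : ℕ) :
    ‖((bif b then 1 else 0) * 2 ^ i : ℤ_[2])‖ ≤ (1 / 2) ^ i := by
  rw [norm_mul, norm_pow, norm_two]
  exact mul_le_of_le_one_left (by positivity) (PadicInt.norm_le_one _)

theorem summable_half_pow : Summable fun i : ℕ => (1 / 2 : ℝ) ^ i :=
  summable_geometric_of_lt_one (by norm_num) (by norm_num)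

theorem continuous_ofBits : Continuous ofBits := by
  refine continuous_tsum (fun i => ?_) summable_half_pow fun i u => norm_bit_le (u i) i
  have : Continuous fun b : Bool => ((bif b then 1 else 0) * 2 ^ i : ℤ_[2]) :=
    continuous_of_discreteTopology
  exact this.comp (continuous_apply i)

theorem ofBits_eq (u : ℕ → Bool) :
    ofBits u = (bif u 0 then 1 else 0) + 2 * ofBits fun n => u (n + 1) := by
  have hs : Summable fun i => ((bif u i then 1 else 0) * 2 ^ i : ℤ_[2]) :=
    Summable.of_norm_bounded summable_half_pow fun i => norm_bit_le (u i) i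
  have hs' : Summable fun i => ((bif u (i + 1) then 1 else 0) * 2 ^ i : ℤ_[2]) :=
    Summable.of_norm_bounded summable_half_pow fun i => norm_bit_le (u (i + 1)) i
  rw [ofBits, hs.tsum_eq_zero_add, ofBits, ← hs'.tsum_mul_left, pow_zero, mul_one]
  congr 2
  ext1 i
  ring

theorem ofBits_zero : ofBits (fun _ => false) = 0 := by
  simp [ofBits]

theorem ofBits_injective : Function.Injective ofBits := by
  have h0 : ∀ u v : ℕ → Bool, ofBits u = ofBits v →
      u 0 = v 0 ∧ ofBits (fun n => u (n + 1)) = ofBits fun n => v (n + 1) := by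
    intro u v h
    rw [ofBits_eq u, ofBits_eq v] at h
    cases hu : u 0 <;> cases hv : v 0 <;>
      simp only [hu, hv, cond_true, cond_false, zero_add] at h
    · exact ⟨rfl, mul_left_cancel₀ two_ne_zero h⟩
    · exact absurd h.symm (one_add_two_mul_ne _ _)
    · exact absurd h (one_add_two_mul_ne _ _)
    · exact ⟨rfl, mul_left_cancel₀ two_ne_zero (add_left_cancel h)⟩
  have key : ∀ (i : ℕ) (u v : ℕ → Bool), ofBits u = ofBits v → u i = v i := by
    intro i
    induction i with
    | zero => exact fun u v h => (h0 u v h).1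
    | succ i ih => exact fun u v h => ih _ _ (h0 u v h).2
  exact fun u v h => funext fun i => key i u v h

theorem ofBits_surjective : Function.Surjective ofBits := by
  have hnat : ∀ n : ℕ, (n : ℤ_[2]) ∈ Set.range ofBits := by
    intro n
    induction n using Nat.strong_induction_on with
    | _ n ih =>
      by_cases hn : n = 0
      · subst hn
        exact ⟨_, by simpa using ofBits_zero⟩
      · obtain ⟨u, hu⟩ := ih (n / 2) (by omega)
        refine ⟨fun i => Nat.casesOn i (decide (n % 2 = 1)) u, ?_⟩
        rw [ofBits_eq]
        change (bif decide (n % 2 = 1) then 1 else 0) + 2 * ofBits u = (n : ℤ_[2])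
        rw [hu]
        have h1 : (n : ℤ_[2]) = ((n % 2 : ℕ) : ℤ_[2]) + 2 * ((n / 2 : ℕ) : ℤ_[2]) := by
          exact_mod_cast congrArg (Nat.cast (R := ℤ_[2])) (Nat.mod_add_div n 2).symm
        rw [h1]
        rcases Nat.mod_two_eq_zero_or_one n with h | h <;> simp [h]
  have hcl : IsClosed (Set.range ofBits) := (isCompact_range continuous_ofBits).isClosed
  rw [← Set.range_eq_univ, ← hcl.closure_eq]
  refine Set.eq_univ_of_univ_subset ?_
  rw [← (PadicInt.denseRange_natCast (p := 2)).closure_eq]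
  exact closure_mono (Set.range_subset_iff.2 hnat)

/-- The homeomorphism of the Cantor space with two copies of `ℤ_2`, as a map. -/
noncomputable def decode (w : ℕ → Bool) : Bool × ℤ_[2] := (w 0, ofBits fun n => w (n + 1))

theorem continuous_decode : Continuous decode :=
  (continuous_apply 0).prodMk (continuous_ofBits.comp (continuous_pi fun _ => continuous_apply _))

theorem decode_injective : Function.Injective decode := by
  intro v w h
  obtain ⟨h0, h1⟩ := Prod.ext_iff.1 h
  funext n
  cases n with
  | zero => exact h0
  | succ n => exact congrFun (ofBits_injective h1) n

theorem decode_surjective : Function.Surjective decode := by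
  rintro ⟨b, z⟩
  obtain ⟨u, rfl⟩ := ofBits_surjective z
  exact ⟨fun i => Nat.casesOn i b u, rfl⟩

/-! ### The homeomorphism -/

/-- The points of the Cantor space at which the two sequences are glued. -/
def gluePoint (i : Fin 2) : ℕ → Bool := fun n => Nat.casesOn n (finTwoEquiv i) fun _ => false

theorem decode_gluePoint (i : Fin 2) : decode (gluePoint i) = (finTwoEquiv i, 0) :=
  Prod.ext rfl ofBits_zero

theorem gluePoint_injective : Function.Injective gluePoint := fun _ _ h =>
  finTwoEquiv.injective (congrFun h 0)

/-- The subgroup attached to a point of two copies of `ℤ_2`. -/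
noncomputable def thinOfParam (p : Bool × ℤ_[2]) : ChabautySpace ℚ_[2]ˣ :=
  thinPoint p.1 (generator p.1 p.2)

theorem continuous_thinOfParam : Continuous thinOfParam :=
  continuous_prod_of_discrete_left.2 fun b =>
    (continuous_thinPoint b).comp (continuous_generator b)

/-- The sequence of open subgroups of type `b` together with its limit. -/
noncomputable def thickOfParam (b : Bool) (x : OnePoint ℕ) : ChabautySpace ℚ_[2]ˣ :=
  x.elim (thinOfParam (b, 0)) (thickPoint b)

theorem continuous_thickOfParam (b : Bool) : Continuous (thickOfParam b) := by
  rw [continuous_iff_from_nat]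
  exact tendsto_thickPoint b _ (generator_zero b)

/-- The subgroup attached to a point of the disjoint union. -/
noncomputable def subgroupOfParam :
    (ℕ → Bool) ⊕ (Fin 2 × OnePoint ℕ) → ChabautySpace ℚ_[2]ˣ :=
  Sum.elim (fun w => thinOfParam (decode w)) fun p => thickOfParam (finTwoEquiv p.1) p.2

theorem continuous_subgroupOfParam : Continuous subgroupOfParam :=
  (continuous_thinOfParam.comp continuous_decode).sumElim
    (continuous_prod_of_discrete_left.2 fun i => continuous_thickOfParam (finTwoEquiv i))

theorem thinOfParam_not (p : Bool × ℤ_[2]) :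
    ¬(IsOpen ((thinOfParam p).1 : Set ℚ_[2]ˣ) ∧ (thinOfParam p).1.index ≠ 0) := fun h =>
  not_isOpen_thin (norm_generator_lt _ _) h.1

theorem subgroupOfParam_not (x : (ℕ → Bool) ⊕ (Fin 2 × OnePoint ℕ)) :
    ¬(IsOpen ((subgroupOfParam x).1 : Set ℚ_[2]ˣ) ∧ (subgroupOfParam x).1.index ≠ 0) := by
  rcases x with w | ⟨i, x⟩
  · exact thinOfParam_not _
  · induction x using OnePoint.rec with
    | infty => exact thinOfParam_not _
    | coe k => exact fun h => h.2 (index_thick _ k)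

end DyadicChabauty

open DyadicChabauty

/-- For `G = ℚ_2^×`, with `N` the set of open finite-index subgroups,
`C(G) ∖ N` is homeomorphic to the space obtained by glueing `[2] × ℕ̄` on the Cantor
space `{0,1}^ℕ`, the `2` accumulation points `(i, ∞)` being identified with `2`
pairwise distinct points of the Cantor space. -/
theorem chabauty_dyadicUnits_minus_N :
    ∃ c : Fin 2 → (ℕ → Bool), Function.Injective c ∧
      Nonempty (
        {H : ChabautySpace ℚ_[2]ˣ | ¬(IsOpen (H.1 : Set ℚ_[2]ˣ) ∧ H.1.index ≠ 0)} ≃ₜ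
        Quot (fun x y : (ℕ → Bool) ⊕ (Fin 2 × OnePoint ℕ) =>
          ∃ i, x = Sum.inl (c i) ∧ y = Sum.inr (i, ∞))) := by
  refine ⟨gluePoint, gluePoint_injective, ⟨Homeomorph.symm ?_⟩⟩
  set r := fun x y : (ℕ → Bool) ⊕ (Fin 2 × OnePoint ℕ) =>
    ∃ i, x = Sum.inl (gluePoint i) ∧ y = Sum.inr (i, ∞) with hr
  have hcompat : ∀ x y, r x y →
      (⟨_, subgroupOfParam_not x⟩ :
        {H : ChabautySpace ℚ_[2]ˣ | ¬(IsOpen (H.1 : Set ℚ_[2]ˣ) ∧ H.1.index ≠ 0)}) =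
        ⟨_, subgroupOfParam_not y⟩ := by
    rintro _ _ ⟨i, rfl, rfl⟩
    apply Subtype.ext
    change thinOfParam (decode (gluePoint i)) = thinOfParam (finTwoEquiv i, 0)
    rw [decode_gluePoint]
  let F : Quot r → {H : ChabautySpace ℚ_[2]ˣ | ¬(IsOpen (H.1 : Set ℚ_[2]ˣ) ∧ H.1.index ≠ 0)} :=
    Quot.lift (fun x => ⟨_, subgroupOfParam_not x⟩) hcompat
  have hF : Continuous F :=
    continuous_quot_lift hcompat (continuous_subgroupOfParam.subtype_mk _)
  have hcases : ∀ q : Quot r, (∃ w, q = Quot.mk r (Sum.inl w)) ∨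
      ∃ i, ∃ k : ℕ, q = Quot.mk r (Sum.inr (i, (k : OnePoint ℕ))) := by
    rintro ⟨w | ⟨i, x⟩⟩
    · exact Or.inl ⟨w, rfl⟩
    · induction x using OnePoint.rec with
      | infty => exact Or.inl ⟨gluePoint i, (Quot.sound ⟨i, rfl, rfl⟩).symm⟩
      | coe k => exact Or.inr ⟨i, k, rfl⟩
  have hne : ∀ p b k, (thinOfParam p).1 ≠ thick b k := fun p b k h =>
    not_isOpen_thin (norm_generator_lt _ _) (h ▸ isOpen_thick b k)
  have hinj : Function.Injective F := by
    intro q q' h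
    have h' := congrArg (fun H => H.1.1) h
    obtain ⟨w, rfl⟩ | ⟨i, k, rfl⟩ := hcases q <;>
      obtain ⟨w', rfl⟩ | ⟨i', k', rfl⟩ := hcases q'
    · obtain ⟨h1, h2⟩ := thin_generator_injective h'
      rw [decode_injective (Prod.ext h1 h2)]
    · exact absurd h' (hne _ _ _)
    · exact absurd h'.symm (hne _ _ _)
    · obtain ⟨h1, h2⟩ := thick_injective h'
      obtain rfl : i = i' := finTwoEquiv.injective h1
      rw [h2]
  have hsurj : Function.Surjective F := by
    rintro ⟨⟨H, hH⟩, hN⟩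
    rcases eq_thin_or_eq_thick hH hN with ⟨b, g, hg, rfl⟩ | ⟨b, k, rfl⟩
    · obtain ⟨z, hz⟩ := exists_thin_generator_eq b hg
      obtain ⟨w, hw⟩ := decode_surjective (b, z)
      refine ⟨Quot.mk r (Sum.inl w), Subtype.ext (Subtype.ext ?_)⟩
      change (thinOfParam (decode w)).1 = thin b g
      rw [hw]
      exact hz
    · refine ⟨Quot.mk r (Sum.inr (finTwoEquiv.symm b, (k : OnePoint ℕ))),
        Subtype.ext (Subtype.ext ?_)⟩
      change thick (finTwoEquiv (finTwoEquiv.symm b)) k = thick b k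
      rw [Equiv.apply_symm_apply]
  exact Continuous.homeoOfEquivCompactToT2 (f := Equiv.ofBijective F ⟨hinj, hsurj⟩) hF
end
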